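/- arXiv:2109.02835 — 2 statements merged into one kernel-verified Lean document; each statement's English description precedes it below -/
import Mathlib

section
/- For all nonnegative integers a and b: the group W is finite, and in the group algebra ℤ[ℤ^6] one has 𝒜(Z^ϱ) · WGF(L6(a,b);Z) = 𝒜(Z^{aω_{1'} + bω_{6'} + ϱ}). (By the Weyl character formula, this says that the weight generating function of L6(a,b) equals the character char_{E6}(aω_{1'}+bω_{6'}) of the irreducible highest-weight-(aω_{1'}+bω_{6'}) representation of the type E6 simple Lie algebra.) -/
noncomputable section

namespace CL

variable {N : Type} [DecidableEq N] [Fintype N]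

/-- One-step relation generating the partial order on the poset of positions. -/
def step (adj : N → N → Prop) (pos : Finset (N × ℕ)) (x y : N × ℕ) : Prop :=
  x ∈ pos ∧ y ∈ pos ∧ adj x.1 y.1 ∧ y.2 = x.2 + 1

/-- The partial order on positions, generated by `step`. -/
def ple (adj : N → N → Prop) (pos : Finset (N × ℕ)) : N × ℕ → N × ℕ → Prop :=
  Relation.ReflTransGen (step adj pos)

/-- The lattice of `ℕ`-labellings of the positions which are bounded by `k`, order-reversing,
and satisfy a further constraint `extra`. -/
def Elt (adj : N → N → Prop) (pos : Finset (N × ℕ)) (k : ℕ)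
    (extra : ({x : N × ℕ // x ∈ pos} → ℕ) → Prop) : Type :=
  {c : {x : N × ℕ // x ∈ pos} → ℕ //
    (∀ x, c x ≤ k) ∧ (∀ x y, ple adj pos y.1 x.1 → c x ≤ c y) ∧ extra c}

variable {adj : N → N → Prop} {pos : Finset (N × ℕ)} {k : ℕ}
  {extra : ({x : N × ℕ // x ∈ pos} → ℕ) → Prop}

instance : Finite (Elt adj pos k extra) := by
  apply Finite.of_injective
    (fun c : Elt adj pos k extra =>
      fun x => (⟨c.1 x, Nat.lt_succ_of_le (c.2.1 x)⟩ : Fin (k + 1)))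
  intro c d h
  apply Subtype.ext
  funext x
  exact congrArg Fin.val (congrFun h x)

instance : Fintype (Elt adj pos k extra) := Fintype.ofFinite _

instance : DecidableEq (Elt adj pos k extra) := by unfold Elt; infer_instance

/-- Componentwise comparison of labellings. -/
def elLe (r s : Elt adj pos k extra) : Prop := ∀ x, r.1 x ≤ s.1 x

/-- The covering edge of color `i`: exactly one entry, at a position of color `i`,
is increased by one. -/
def edge (i : N) (r s : Elt adj pos k extra) : Prop :=
  ∃ x : {x : N × ℕ // x ∈ pos}, x.1.1 = i ∧ s.1 x = r.1 x + 1 ∧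
    ∀ y, y ≠ x → s.1 y = r.1 y

instance (i : N) (r s : Elt adj pos k extra) : Decidable (edge i r s) := by
  unfold edge; infer_instance

/-- The rank function: the sum of all entries. -/
def rk (t : Elt adj pos k extra) : ℕ := ∑ x ∈ pos.attach, t.1 x

/-- The connected component of `t` in the graph of color-`i` covering edges. -/
def comp (i : N) (t : Elt adj pos k extra) : Set (Elt adj pos k extra) :=
  {s | Relation.ReflTransGen (fun a b => edge i a b ∨ edge i b a) t s}

/-- The integer `m_i(t) = (ρ(t) − min ρ on comp_i(t)) − (max ρ on comp_i(t) − ρ(t))`. -/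
def mwt (i : N) (t : Elt adj pos k extra) : ℤ :=
  ((rk t : ℤ) - ((sInf (rk '' comp i t) : ℕ) : ℤ)) -
    (((sSup (rk '' comp i t) : ℕ) : ℤ) - (rk t : ℤ))

end CL

namespace CL

variable {N : Type} [DecidableEq N] [Fintype N]

/-- The matrix of the simple reflection `S_i : μ ↦ μ − μ_i·(row i of A)`, acting via `mulVec`. -/
def refl (A : N → N → ℤ) (i : N) : Matrix N N ℤ :=
  fun j l => (if j = l then 1 else 0) - (if l = i then A i j else 0)

/-- The Weyl group: the group of integer matrices generated by the simple reflections
(each `S_i` is an involution, so the generated submonoid is a group). -/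
def weyl (A : N → N → ℤ) : Submonoid (Matrix N N ℤ) :=
  Submonoid.closure (Set.range (refl A))

/-- The alternant `𝒜(Z^ν) = Σ_{w∈W} det(w)·Z^{w(ν)}` in the group algebra `ℤ[ℤ^N]`. -/
def alt (A : N → N → ℤ) (ν : N → ℤ) : AddMonoidAlgebra ℤ (N → ℤ) :=
  ∑ᶠ w ∈ (weyl A : Set (Matrix N N ℤ)),
    AddMonoidAlgebra.single (Matrix.mulVec w ν) (Matrix.det w)

end CL

namespace CL

variable {N : Type} [DecidableEq N] [Fintype N]

/-- The weight generating function `WGF(L;Z) = Σ_{t∈L} Z^{wt(t)}` in `ℤ[ℤ^N]`. -/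
def wgf (adj : N → N → Prop) (pos : Finset (N × ℕ)) (k : ℕ)
    (extra : ({x : N × ℕ // x ∈ pos} → ℕ) → Prop) : AddMonoidAlgebra ℤ (N → ℤ) :=
  ∑ t : Elt adj pos k extra, AddMonoidAlgebra.single (fun i => mwt i t) 1

end CL

/-! ### Type `E₆` data -/

/-- The nodes `1', 2', 3', 4', 5', 6'` of the `E₆` Dynkin diagram. -/
inductive N6 : Type
  | m1 | m2 | m3 | m4 | m5 | m6
  deriving DecidableEq

instance : Fintype N6 where
  elems := {.m1, .m2, .m3, .m4, .m5, .m6}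
  complete := by intro x; cases x <;> decide

open N6

/-- Adjacency in the `E₆` Dynkin diagram: edges `1'-2', 2'-3', 3'-4', 3'-5', 5'-6'`. -/
abbrev adj6 : N6 → N6 → Prop := fun a b =>
  (a, b) ∈ ([(m1, m2), (m2, m3), (m3, m4), (m3, m5), (m5, m6)] : List (N6 × N6)) ∨
  (b, a) ∈ ([(m1, m2), (m2, m3), (m3, m4), (m3, m5), (m5, m6)] : List (N6 × N6))

/-- The Cartan matrix of type `E₆`, indexed by the nodes. -/
def A6 : N6 → N6 → ℤ := fun i j => if i = j then 2 else if adj6 i j then -1 else 0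

/-- The 24 (color, rank) positions of the poset `P24 = 𝒫`. -/
def pos24 : Finset (N6 × ℕ) :=
  {(m1, 0), (m2, 1), (m3, 2), (m4, 3), (m5, 3), (m3, 4), (m6, 4), (m2, 5), (m5, 5),
   (m1, 6), (m3, 6), (m2, 7), (m4, 7), (m1, 8), (m3, 8), (m2, 9), (m5, 9), (m3, 10),
   (m6, 10), (m4, 11), (m5, 11), (m3, 12), (m2, 13), (m1, 14)}

/-- The 16 (color, rank) positions of the minuscule poset `P16' = P_{E₆}(ω₁')`. -/
def pos16p : Finset (N6 × ℕ) :=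
  {(m6, 0), (m5, 1), (m3, 2), (m2, 3), (m4, 3), (m1, 4), (m3, 4), (m2, 5), (m5, 5),
   (m3, 6), (m6, 6), (m4, 7), (m5, 7), (m3, 8), (m2, 9), (m1, 10)}

/-- The 16 (color, rank) positions of the minuscule poset `P16'' = P_{E₆}(ω₆')`. -/
def pos16pp : Finset (N6 × ℕ) :=
  {(m1, 0), (m2, 1), (m3, 2), (m4, 3), (m5, 3), (m3, 4), (m6, 4), (m2, 5), (m5, 5),
   (m1, 6), (m3, 6), (m2, 7), (m4, 7), (m3, 8), (m5, 9), (m6, 10)}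

/-- The extra constraints on elements of `L6(a,b)`: `c((1',8)) ≤ a` and `c((1',6)) ≥ a`. -/
def extra6 (a : ℕ) : ({x : N6 × ℕ // x ∈ pos24} → ℕ) → Prop := fun c =>
  c ⟨(m1, 8), by decide⟩ ≤ a ∧ a ≤ c ⟨(m1, 6), by decide⟩

/-- The lattice `L6(a,b) = L_{E₆}(aω₁' + bω₆')`. -/
abbrev L6ab (a b : ℕ) : Type := CL.Elt adj6 pos24 (a + b) (extra6 a)

/-- The lattice `L6'(k) = L_{E₆}(kω₁')`. -/
abbrev L6p (k : ℕ) : Type := CL.Elt adj6 pos16p k (fun _ => True)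

/-- The lattice `L6''(k) = L_{E₆}(kω₆')`. -/
abbrev L6pp (k : ℕ) : Type := CL.Elt adj6 pos16pp k (fun _ => True)

/-!
Adding to `P24` three positions colored by an extra node turns it into the minuscule heap of type
`E₇`, and `L6(a,b)` becomes the set of order-reversing labellings of this heap in which the three
new labels are frozen at `a + b`, `a` and `0`. In a minuscule heap the labels of one color vary
independently in intervals cut out by the labels of adjacent colors, and the endpoints of these
intervals are, as a multiset, exactly the adjacent labels. Hence `m_i` is the linear functional of
the labels given by the Cartan matrix, and reflecting each label of color `i` in its interval
realizes `S_i` on the weights. The weights are therefore `W`-invariant, and `𝒜(Z^ϱ) · WGF` equals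
the sum of `𝒜(Z^(ϱ + wt t))` over all `t`.

Now slice a labelling into its levels. At the highest level where dominance fails, the partial
weight at some color `i` is exactly `-1`; reflecting the labels of color `i` below this level maps
`ϱ + wt t` to its image under `S_i`, and it does not change the levels above. So the labellings that
are not dominant cancel in pairs. The only labelling that is dominant at every level is the highest
one, of weight `aω₁' + bω₆'`.
-/

namespace CL

section Weyl

variable {N : Type} [DecidableEq N] {A : N → N → ℤ}

lemma refl_eq_one_sub_vecMulVec (A : N → N → ℤ) (i : N) :
    refl A i = 1 - Matrix.vecMulVec (A i) (Pi.single i 1) := by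
  ext j l
  simp [refl, Matrix.vecMulVec_apply, Matrix.one_apply, Pi.single_apply]

variable [Fintype N]

lemma refl_mulVec_apply (A : N → N → ℤ) (i : N) (μ : N → ℤ) (j : N) :
    (refl A i).mulVec μ j = μ j - A i j * μ i := by
  simp [Matrix.mulVec, dotProduct, refl, sub_mul, Finset.sum_sub_distrib]

lemma refl_mul_self {i : N} (hi : A i i = 2) : refl A i * refl A i = 1 := by
  refine Matrix.ext_of_mulVec_single fun l => funext fun j => ?_
  rw [← Matrix.mulVec_mulVec, Matrix.one_mulVec]
  simp only [refl_mulVec_apply, hi]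
  ring

lemma det_refl {i : N} (hi : A i i = 2) : (refl A i).det = -1 := by
  rw [refl_eq_one_sub_vecMulVec, sub_eq_add_neg, ← Matrix.neg_vecMulVec, Matrix.vecMulVec_eq Unit,
    Matrix.det_one_add_replicateCol_mul_replicateRow]
  simp [hi]

lemma refl_mem_weyl (A : N → N → ℤ) (i : N) : refl A i ∈ weyl A :=
  Submonoid.subset_closure ⟨i, rfl⟩

lemma alt_eq_sum (hW : (weyl A : Set (Matrix N N ℤ)).Finite) (ν : N → ℤ) :
    alt A ν = ∑ w ∈ hW.toFinset, AddMonoidAlgebra.single (w.mulVec ν) w.det :=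
  finsum_mem_eq_finite_toFinset_sum _ hW

lemma alt_refl_mulVec (hW : (weyl A : Set (Matrix N N ℤ)).Finite) {i : N} (hi : A i i = 2)
    (ν : N → ℤ) : alt A ((refl A i).mulVec ν) = -alt A ν := by
  have hmem : ∀ w ∈ hW.toFinset, w * refl A i ∈ hW.toFinset := fun w hw =>
    hW.mem_toFinset.2 (mul_mem (hW.mem_toFinset.1 hw) (refl_mem_weyl A i))
  have hinv : ∀ w : Matrix N N ℤ, w * refl A i * refl A i = w := fun w => by
    rw [mul_assoc, refl_mul_self hi, mul_one]
  rw [alt_eq_sum hW, alt_eq_sum hW, ← Finset.sum_neg_distrib]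
  refine Finset.sum_bij' (fun w _ => w * refl A i) (fun w _ => w * refl A i) hmem hmem
    (fun w _ => hinv w) (fun w _ => hinv w) fun w _ => ?_
  rw [Matrix.mulVec_mulVec, Matrix.det_mul, det_refl hi, mul_neg_one,
    AddMonoidAlgebra.single_neg, neg_neg]

lemma exists_perm_of_mem_weyl {L : Type*} {wt : L → N → ℤ}
    (hwt : ∀ i, ∃ σ : Equiv.Perm L, ∀ t, wt (σ t) = (refl A i).mulVec (wt t))
    {w : Matrix N N ℤ} (hw : w ∈ weyl A) :
    ∃ σ : Equiv.Perm L, ∀ t, wt (σ t) = w.mulVec (wt t) := by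
  induction hw using Submonoid.closure_induction with
  | mem w hw =>
    obtain ⟨i, rfl⟩ := hw
    exact hwt i
  | one => exact ⟨1, fun t => by simp⟩
  | mul w w' _ _ h h' =>
    obtain ⟨σ, hσ⟩ := h
    obtain ⟨σ', hσ'⟩ := h'
    exact ⟨σ * σ', fun t => by rw [Equiv.Perm.mul_apply, hσ, hσ', Matrix.mulVec_mulVec]⟩

lemma alt_mul_sum_single (hW : (weyl A : Set (Matrix N N ℤ)).Finite) {L : Type*} [Fintype L]
    {wt : L → N → ℤ}
    (hwt : ∀ i, ∃ σ : Equiv.Perm L, ∀ t, wt (σ t) = (refl A i).mulVec (wt t)) (ν : N → ℤ) :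
    alt A ν * ∑ t, AddMonoidAlgebra.single (wt t) 1 = ∑ t, alt A (ν + wt t) := by
  simp only [alt_eq_sum hW]
  rw [Finset.sum_comm, Finset.sum_mul]
  refine Finset.sum_congr rfl fun w hw => ?_
  obtain ⟨σ, hσ⟩ := exists_perm_of_mem_weyl hwt (hW.mem_toFinset.1 hw)
  rw [← Equiv.sum_comp σ, Finset.mul_sum]
  refine Finset.sum_congr rfl fun t _ => ?_
  rw [AddMonoidAlgebra.single_mul_single, mul_one, hσ, Matrix.mulVec_add]

lemma mul_mul_transpose_of_mem_weyl (hsymm : ∀ i j, A i j = A j i) (hdiag : ∀ i, A i i = 2)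
    {w : Matrix N N ℤ} (hw : w ∈ weyl A) : w * Matrix.of A * w.transpose = Matrix.of A := by
  induction hw using Submonoid.closure_induction with
  | mem w hw =>
    obtain ⟨i, rfl⟩ := hw
    ext j l
    have hleft : ∀ m, (refl A i * Matrix.of A) j m = A j m - A i j * A i m := fun m =>
      refl_mulVec_apply A i (fun j => A j m) j
    have hright : (refl A i * Matrix.of A * (refl A i).transpose) j l =
        (refl A i).mulVec ((refl A i * Matrix.of A) j) l := by
      simp [Matrix.mul_apply, Matrix.mulVec, dotProduct, mul_comm]
    rw [hright, refl_mulVec_apply, hleft, hleft, hdiag, hsymm j i, Matrix.of_apply]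
    ring
  | one => simp
  | mul w w' _ _ h h' =>
    rw [Matrix.transpose_mul, ← mul_assoc, mul_assoc w w', mul_assoc w, h', h]

/-- The rows of a Weyl group element are roots: their square length is `2`, so that a coercive
form leaves only finitely many of them. -/
lemma weyl_finite (hsymm : ∀ i j, A i j = A j i) (hdiag : ∀ i, A i i = 2) {c : ℤ}
    (hc : ∀ (x : N → ℤ) l, x l ^ 2 ≤ c * (x ⬝ᵥ (Matrix.of A).mulVec x)) :
    (weyl A : Set (Matrix N N ℤ)).Finite := by
  have hbox : (Set.pi Set.univ fun _ : N => Set.pi Set.univ fun _ : N =>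
      Set.Icc (-(c * 2)) (c * 2)).Finite :=
    Set.Finite.pi fun _ => Set.Finite.pi fun _ => Set.finite_Icc _ _
  refine hbox.subset fun (w : Matrix N N ℤ) hw j _ l _ => ?_
  have hroot : w j ⬝ᵥ (Matrix.of A).mulVec (w j) = 2 := by
    have hjj := congrFun (congrFun (mul_mul_transpose_of_mem_weyl hsymm hdiag hw) j) j
    rwa [Matrix.mul_mul_apply, Matrix.of_apply, hdiag] at hjj
  have hsq : w j l ^ 2 ≤ c * 2 := hroot ▸ hc (w j) l
  constructor <;> nlinarith

end Weyl

end CL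

namespace CL

section Weight

variable {N : Type} {adj : N → N → Prop} {pos : Finset (N × ℕ)} {k : ℕ}
  {extra : ({x : N × ℕ // x ∈ pos} → ℕ) → Prop} {i : N} {t : Elt adj pos k extra}
  {L H : {x : N × ℕ // x ∈ pos} → ℕ}

/-- The elements of the lattice that agree with `t` off color `i` are the labellings with values
between `L` and `H` on color `i`; such a color fibre is a product of chains. -/
def IsColorBox (i : N) (t : Elt adj pos k extra) (L H : {x : N × ℕ // x ∈ pos} → ℕ) : Prop :=
  ∀ c : {x : N × ℕ // x ∈ pos} → ℕ, (∀ x, x.1.1 ≠ i → c x = t.1 x) →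
    ((∃ s : Elt adj pos k extra, s.1 = c) ↔ ∀ x, x.1.1 = i → L x ≤ c x ∧ c x ≤ H x)

lemma eq_of_mem_comp {s : Elt adj pos k extra} (hs : s ∈ comp i t) {x : {x : N × ℕ // x ∈ pos}}
    (hx : x.1.1 ≠ i) : s.1 x = t.1 x := by
  have hedge : ∀ r s : Elt adj pos k extra, edge i r s → s.1 x = r.1 x := by
    rintro r s ⟨y, hy, -, hne⟩
    exact hne x fun h => hx (h ▸ hy)
  induction hs with
  | refl => rfl
  | tail _ hstep ih =>
    rcases hstep with h | h
    · rw [hedge _ _ h, ih]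
    · rw [← hedge _ _ h, ih]

lemma rk_mono {r s : Elt adj pos k extra} (hrs : elLe r s) : rk r ≤ rk s :=
  Finset.sum_le_sum fun x _ => hrs x

lemma IsColorBox.exists_edge_of_ne (hbox : IsColorBox i t L H) {r s : Elt adj pos k extra}
    (hr : ∀ x, x.1.1 ≠ i → r.1 x = t.1 x) (hs : ∀ x, x.1.1 ≠ i → s.1 x = t.1 x)
    (hrs : elLe r s) (hne : r ≠ s) : ∃ s', edge i s' s ∧ elLe r s' := by
  classical
  obtain ⟨x, hx⟩ : ∃ x, r.1 x < s.1 x := by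
    by_contra! hle
    exact hne (Subtype.ext (funext fun x => (hrs x).antisymm (hle x)))
  have hxi : x.1.1 = i := by
    by_contra hxi
    rw [hr x hxi, hs x hxi] at hx
    exact hx.false
  have hoff : ∀ y, y.1.1 ≠ i → Function.update s.1 x (s.1 x - 1) y = t.1 y := fun y hy => by
    rw [Function.update_of_ne (by rintro rfl; exact hy hxi), hs y hy]
  obtain ⟨s', hs'⟩ := (hbox _ hoff).2 fun y hy => by
    have hry := ((hbox r.1 hr).1 ⟨r, rfl⟩ y hy).1
    have hsy := (hbox s.1 hs).1 ⟨s, rfl⟩ y hy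
    obtain rfl | hyx := eq_or_ne y x
    · rw [Function.update_self]
      omega
    · rwa [Function.update_of_ne hyx]
  have hs'x : s'.1 x = s.1 x - 1 := by rw [hs', Function.update_self]
  have hs'y : ∀ y, y ≠ x → s'.1 y = s.1 y := fun y hy => by rw [hs', Function.update_of_ne hy]
  refine ⟨s', ⟨x, hxi, by omega, fun y hy => (hs'y y hy).symm⟩, fun y => ?_⟩
  obtain rfl | hyx := eq_or_ne y x
  · omega
  · exact (hrs y).trans_eq (hs'y y hyx).symm

lemma rk_lt_rk_of_edge {r s : Elt adj pos k extra} (h : edge i r s) : rk r < rk s := by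
  obtain ⟨x, -, hx, hne⟩ := h
  refine Finset.sum_lt_sum (fun y _ => ?_) ⟨x, Finset.mem_attach _ _, by omega⟩
  obtain rfl | hyx := eq_or_ne y x
  · omega
  · exact (hne y hyx).ge

lemma IsColorBox.reflTransGen_edge (hbox : IsColorBox i t L H) {r s : Elt adj pos k extra}
    (hr : ∀ x, x.1.1 ≠ i → r.1 x = t.1 x) (hs : ∀ x, x.1.1 ≠ i → s.1 x = t.1 x)
    (hrs : elLe r s) : Relation.ReflTransGen (edge i) r s := by
  induction hn : rk s using Nat.strong_induction_on generalizing s with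
  | _ n ih =>
    obtain rfl | hne := eq_or_ne r s
    · rfl
    obtain ⟨s', hedge, hle⟩ := hbox.exists_edge_of_ne hr hs hrs hne
    refine .tail (ih (rk s') (hn ▸ rk_lt_rk_of_edge hedge) (fun x hx => ?_) hle rfl) hedge
    obtain ⟨y, hy, -, hoff⟩ := hedge
    rw [← hoff x (by rintro rfl; exact hx hy), hs x hx]

lemma IsColorBox.mem_comp_of_elLe (hbox : IsColorBox i t L H) {s : Elt adj pos k extra}
    (hs : ∀ x, x.1.1 ≠ i → s.1 x = t.1 x) (hle : elLe s t ∨ elLe t s) : s ∈ comp i t := by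
  rcases hle with h | h
  · have hchain := hbox.reflTransGen_edge hs (fun _ _ => rfl) h
    exact Relation.ReflTransGen.mono (fun _ _ => Or.inr) _ _ (Relation.reflTransGen_swap.2 hchain)
  · have hchain := hbox.reflTransGen_edge (fun _ _ => rfl) hs h
    exact Relation.ReflTransGen.mono (fun _ _ => Or.inl) _ _ hchain

lemma IsColorBox.mem_Icc (hbox : IsColorBox i t L H) {s : Elt adj pos k extra}
    (hs : s ∈ comp i t) {x : {x : N × ℕ // x ∈ pos}} (hx : x.1.1 = i) :
    L x ≤ s.1 x ∧ s.1 x ≤ H x :=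
  (hbox s.1 fun _ => eq_of_mem_comp hs).1 ⟨s, rfl⟩ x hx

variable [DecidableEq N]

lemma IsColorBox.exists_fill (hbox : IsColorBox i t L H) {F : {x : N × ℕ // x ∈ pos} → ℕ}
    (hF : ∀ x, x.1.1 = i → L x ≤ F x ∧ F x ≤ H x) :
    ∃ s : Elt adj pos k extra, s.1 = fun x => if x.1.1 = i then F x else t.1 x :=
  (hbox _ fun x hx => if_neg hx).2 fun x hx => by simpa only [if_pos hx] using hF x hx

lemma rk_sub_rk_of_fill {s : Elt adj pos k extra} {F : {x : N × ℕ // x ∈ pos} → ℕ}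
    (hs : s.1 = fun x => if x.1.1 = i then F x else t.1 x) :
    (rk t : ℤ) - rk s = ∑ x with x.1.1 = i, ((t.1 x : ℤ) - F x) := by
  rw [rk, rk, Nat.cast_sum, Nat.cast_sum, ← Finset.sum_sub_distrib, Finset.sum_filter]
  refine Finset.sum_congr rfl fun x _ => ?_
  rw [hs]
  dsimp only
  split_ifs <;> simp

theorem IsColorBox.mwt_eq (hbox : IsColorBox i t L H) :
    mwt i t = ∑ x with x.1.1 = i, (2 * (t.1 x : ℤ) - L x - H x) := by
  have ht := fun x hx => hbox.mem_Icc (s := t) .refl (x := x) hx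
  obtain ⟨bot, hbot⟩ := hbox.exists_fill (F := L) fun x hx =>
    ⟨le_rfl, (ht x hx).1.trans (ht x hx).2⟩
  obtain ⟨top, htop⟩ := hbox.exists_fill (F := H) fun x hx =>
    ⟨(ht x hx).1.trans (ht x hx).2, le_rfl⟩
  have hbot_le : ∀ s ∈ comp i t, elLe bot s := fun s hs x => by
    rw [hbot]
    dsimp only
    split_ifs with hx
    exacts [(hbox.mem_Icc hs hx).1, (eq_of_mem_comp hs hx).ge]
  have hle_top : ∀ s ∈ comp i t, elLe s top := fun s hs x => by
    rw [htop]
    dsimp only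
    split_ifs with hx
    exacts [(hbox.mem_Icc hs hx).2, (eq_of_mem_comp hs hx).le]
  have hleast : IsLeast (rk '' comp i t) (rk bot) :=
    ⟨⟨bot, hbox.mem_comp_of_elLe (fun x hx => by rw [hbot]; exact if_neg hx)
      (.inl (hbot_le t .refl)), rfl⟩, Set.forall_mem_image.2 fun s hs => rk_mono (hbot_le s hs)⟩
  have hgreatest : IsGreatest (rk '' comp i t) (rk top) :=
    ⟨⟨top, hbox.mem_comp_of_elLe (fun x hx => by rw [htop]; exact if_neg hx)
      (.inr (hle_top t .refl)), rfl⟩, Set.forall_mem_image.2 fun s hs => rk_mono (hle_top s hs)⟩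
  rw [mwt, hleast.csInf_eq, hgreatest.csSup_eq, rk_sub_rk_of_fill hbot, ← neg_sub (rk t : ℤ),
    rk_sub_rk_of_fill htop, sub_neg_eq_add, ← Finset.sum_add_distrib]
  exact Finset.sum_congr rfl fun x _ => by ring

end Weight

end CL

/-- A heap over the graph `G`: a set of positions with colors and ranks, in which positions of
equal or adjacent colors are always comparable by rank. -/
structure ColoredHeap {M : Type*} (G : SimpleGraph M) (Q : Type*) where
  /-- The color of a position. -/
  color : Q → M
  /-- The rank of a position. -/
  rank : Q → ℕ
  eq_of_rank_eq {x y : Q} : color x = color y → rank x = rank y → x = y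
  rank_ne_of_adj {x y : Q} : G.Adj (color x) (color y) → rank x ≠ rank y

/-- The generalized Cartan matrix of a simple graph. -/
def cartan {M : Type*} [DecidableEq M] (G : SimpleGraph M) [DecidableRel G.Adj] (i j : M) : ℤ :=
  if i = j then 2 else if G.Adj i j then -1 else 0

lemma cartan_self {M : Type*} [DecidableEq M] (G : SimpleGraph M) [DecidableRel G.Adj] (i : M) :
    cartan G i i = 2 :=
  if_pos rfl

lemma cartan_comm {M : Type*} [DecidableEq M] (G : SimpleGraph M) [DecidableRel G.Adj] (i j : M) :
    cartan G i j = cartan G j i := by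
  simp only [cartan, eq_comm, G.adj_comm]

namespace ColoredHeap

open scoped Finset

variable {M Q : Type*} {G : SimpleGraph M} (H : ColoredHeap G Q)

/-- `x` precedes `y` in the heap and has an adjacent color. -/
def Before (x y : Q) : Prop := G.Adj (H.color x) (H.color y) ∧ H.rank x < H.rank y

instance [DecidableRel G.Adj] : DecidableRel H.Before := fun x y => by
  unfold Before; infer_instance

/-- A labelling of the positions that is order-reversing for the heap order. -/
def IsAntitone (f : Q → ℕ) : Prop := ∀ x y, H.Before x y → f y ≤ f x

variable [Fintype Q] {f g : Q → ℕ} {i : M} {x : Q} {h : ℕ}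

section Neighbors

variable [DecidableRel G.Adj]

/-- The positions whose color is adjacent to `i`. -/
def neighbors (i : M) : Finset Q := {z | G.Adj i (H.color z)}

/-- The neighbors of `x` that precede `x`. -/
def below (x : Q) : Finset Q := {z | H.Before z x}

/-- The neighbors of `x` that follow `x`. -/
def above (x : Q) : Finset Q := {z | H.Before x z}

/-- The smallest value that an order-reversing labelling can take at `x`, given the labels of the
neighbors. -/
def lo (f : Q → ℕ) (x : Q) : ℕ := (H.above x).sup f

/-- The largest value that an order-reversing labelling can take at `x`, given the labels of the
neighbors; it has the junk value `0` if no neighbor precedes `x`. -/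
def hi (f : Q → ℕ) (x : Q) : ℕ := sInf (f '' H.below x)

variable {H}

lemma mem_neighbors : x ∈ H.neighbors i ↔ G.Adj i (H.color x) := by simp [neighbors]

lemma mem_below {z : Q} : z ∈ H.below x ↔ H.Before z x := by simp [below]

lemma mem_above {z : Q} : z ∈ H.above x ↔ H.Before x z := by simp [above]

lemma below_subset_neighbors : H.below x ⊆ H.neighbors (H.color x) := fun _ hz =>
  mem_neighbors.2 (mem_below.1 hz).1.symm

lemma mem_below_or_mem_above {z : Q} (hz : z ∈ H.neighbors (H.color x)) :
    z ∈ H.below x ∨ z ∈ H.above x := by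
  have hadj := mem_neighbors.1 hz
  rcases (H.rank_ne_of_adj hadj).lt_or_gt with hlt | hlt
  · exact .inr (mem_above.2 ⟨hadj, hlt⟩)
  · exact .inl (mem_below.2 ⟨hadj.symm, hlt⟩)

lemma lo_le_iff : H.lo f x ≤ h ↔ ∀ z, H.Before x z → f z ≤ h := by
  simp [lo, mem_above]

lemma lt_lo_iff : h < H.lo f x ↔ ∃ z, H.Before x z ∧ h < f z := by
  simp [lo, mem_above]

lemma le_hi_iff (hx : (H.below x).Nonempty) : h ≤ H.hi f x ↔ ∀ z, H.Before z x → h ≤ f z := by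
  rw [hi, le_csInf_iff (OrderBot.bddBelow _) (by simpa using hx)]
  simp [mem_below]

lemma lo_congr (hfg : ∀ z, H.color z ≠ H.color x → g z = f z) : H.lo g x = H.lo f x :=
  Finset.sup_congr rfl fun z hz => hfg z (mem_above.1 hz).1.ne'

lemma hi_congr (hfg : ∀ z, H.color z ≠ H.color x → g z = f z) : H.hi g x = H.hi f x := by
  rw [hi, hi, Set.image_congr fun z hz => hfg z (mem_below.1 hz).1.ne]

lemma IsAntitone.lo_le (hf : H.IsAntitone f) : H.lo f x ≤ f x := lo_le_iff.2 fun z => hf x z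

lemma IsAntitone.le_hi (hf : H.IsAntitone f) (hx : (H.below x).Nonempty) : f x ≤ H.hi f x :=
  (le_hi_iff hx).2 fun z => hf z x

lemma IsAntitone.lt_hi_iff_card_le (hf : H.IsAntitone f) (hx : (H.below x).Nonempty) :
    h < H.hi f x ↔ #(H.below x) ≤ #{z ∈ H.neighbors (H.color x) | h < f z} := by
  rw [← Nat.add_one_le_iff, le_hi_iff hx]
  constructor
  · exact fun hall => Finset.card_le_card fun z hz =>
      Finset.mem_filter.2 ⟨below_subset_neighbors hz, hall z (mem_below.1 hz)⟩
  · intro hcard z hz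
    by_contra! hle
    refine hcard.not_gt (Finset.card_lt_card ?_)
    refine (Finset.ssubset_iff_of_subset fun w hw => ?_).2
      ⟨z, mem_below.2 hz, fun hmem => (Finset.mem_filter.1 hmem).2.not_ge (by omega)⟩
    obtain ⟨hwn, hwh⟩ := Finset.mem_filter.1 hw
    refine (mem_below_or_mem_above hwn).resolve_right fun hwx => ?_
    have := hf x w (mem_above.1 hwx)
    have := hf z x hz
    omega

lemma IsAntitone.lt_lo_iff_card_lt (hf : H.IsAntitone f) :
    h < H.lo f x ↔ #(H.below x) < #{z ∈ H.neighbors (H.color x) | h < f z} := by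
  rw [lt_lo_iff]
  constructor
  · rintro ⟨w, hw, hwh⟩
    refine Finset.card_lt_card ((Finset.ssubset_iff_of_subset fun z hz => ?_).2
      ⟨w, Finset.mem_filter.2 ⟨mem_neighbors.2 hw.1, hwh⟩,
        fun hmem => (mem_below.1 hmem).2.asymm hw.2⟩)
    have := hf z x (mem_below.1 hz)
    have := hf x w hw
    exact Finset.mem_filter.2 ⟨below_subset_neighbors hz, by omega⟩
  · contrapose!
    refine fun hall => Finset.card_le_card fun z hz => ?_
    obtain ⟨hzn, hzh⟩ := Finset.mem_filter.1 hz
    exact (mem_below_or_mem_above hzn).resolve_right fun hzx =>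
      (hall z (mem_above.1 hzx)).not_gt hzh

end Neighbors

section ColorClass

variable [DecidableEq M]

/-- The positions of color `i`. -/
def colorClass (i : M) : Finset Q := {x | H.color x = i}

/-- The number of positions of the color of `x` that precede `x`. -/
def index (x : Q) : ℕ := #{y | H.color y = H.color x ∧ H.rank y < H.rank x}

variable {H}

lemma mem_colorClass : x ∈ H.colorClass i ↔ H.color x = i := by simp [colorClass]

lemma index_lt_index {y : Q} (hc : H.color x = H.color y) (hr : H.rank x < H.rank y) :
    H.index x < H.index y := by
  refine Finset.card_lt_card ((Finset.ssubset_iff_of_subset fun z hz => ?_).2 ⟨x, ?_, ?_⟩)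
  · simp only [Finset.mem_filter_univ] at hz ⊢
    exact ⟨hz.1.trans hc, hz.2.trans hr⟩
  · simp [hc, hr]
  · simp

lemma index_injOn_colorClass : Set.InjOn H.index (H.colorClass i) := by
  intro x hx y hy hxy
  have hc : H.color x = H.color y := (mem_colorClass.1 hx).trans (mem_colorClass.1 hy).symm
  refine H.eq_of_rank_eq hc ?_
  by_contra hne
  rcases Nat.lt_or_gt_of_ne hne with hlt | hlt
  exacts [(index_lt_index hc hlt).ne hxy, (index_lt_index hc.symm hlt).ne' hxy]

lemma image_index_colorClass :
    (H.colorClass i).image H.index = Finset.range #(H.colorClass i) := by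
  refine Finset.eq_of_subset_of_card_le (fun n hn => ?_) ?_
  · obtain ⟨x, hx, rfl⟩ := Finset.mem_image.1 hn
    obtain rfl := mem_colorClass.1 hx
    refine Finset.mem_range.2 (Finset.card_lt_card ?_)
    refine (Finset.ssubset_iff_of_subset fun z hz => ?_).2 ⟨x, hx, by simp⟩
    exact mem_colorClass.2 (Finset.mem_filter.1 hz).2.1
  · rw [Finset.card_range, Finset.card_image_of_injOn index_injOn_colorClass]

lemma card_index_lt {m : ℕ} (hm : m ≤ #(H.colorClass i)) :
    #{x ∈ H.colorClass i | H.index x < m} = m := by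
  rw [← Finset.card_image_of_injOn (index_injOn_colorClass.mono (Finset.filter_subset _ _)),
    ← Finset.filter_image (p := (· < m)), image_index_colorClass]
  conv_rhs => rw [← Finset.card_range m]
  congr 1
  ext n
  simp only [Finset.mem_filter, Finset.mem_range]
  omega

end ColorClass

variable [DecidableEq M] [DecidableRel G.Adj]

/-- The defining property of full heaps of minuscule representations at the color `i`: exactly two
neighbors lie between consecutive positions of color `i`, one precedes the first and one follows the
last. -/
structure IsMinuscule (i : M) : Prop where
  card_below : ∀ x, H.color x = i → #(H.below x) = 2 * H.index x + 1
  card_neighbors : #(H.neighbors i) = 2 * #(H.colorClass i)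

variable {H}

lemma IsMinuscule.nonempty_below (hi : H.IsMinuscule i) (hx : H.color x = i) :
    (H.below x).Nonempty :=
  Finset.card_pos.1 (by have := hi.card_below x hx; omega)

lemma IsAntitone.isAntitone_iff_of_eq_off (hf : H.IsAntitone f) (hi : H.IsMinuscule i)
    (hfg : ∀ z, H.color z ≠ i → g z = f z) :
    H.IsAntitone g ↔ ∀ x, H.color x = i → H.lo f x ≤ g x ∧ g x ≤ H.hi f x := by
  constructor
  · rintro hg x rfl
    rw [← lo_congr hfg, ← hi_congr hfg]
    exact ⟨hg.lo_le, hg.le_hi (hi.nonempty_below rfl)⟩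
  · intro hbox x y hxy
    by_cases hx : H.color x = i
    · have hy : H.color y ≠ i := hx ▸ hxy.1.ne'
      exact hfg y hy ▸ lo_le_iff.1 (hbox x hx).1 y hxy
    · rw [hfg x hx]
      by_cases hy : H.color y = i
      · exact (le_hi_iff (hi.nonempty_below hy)).1 (hbox y hy).2 x hxy
      · exact hfg y hy ▸ hf x y hxy

lemma IsMinuscule.card_filter_neighbors_le (hi : H.IsMinuscule i) (p : Q → Prop)
    [DecidablePred p] : #{z ∈ H.neighbors i | p z} ≤ 2 * #(H.colorClass i) :=
  hi.card_neighbors ▸ Finset.card_filter_le _ _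

lemma IsAntitone.card_lt_hi (hf : H.IsAntitone f) (hi : H.IsMinuscule i) :
    #{x ∈ H.colorClass i | h < H.hi f x} = (#{z ∈ H.neighbors i | h < f z} + 1) / 2 := by
  have hle := hi.card_filter_neighbors_le (h < f ·)
  rw [← card_index_lt (i := i) (H := H) (m := (#{z ∈ H.neighbors i | h < f z} + 1) / 2) (by omega)]
  refine congrArg _ (Finset.filter_congr fun x hx => ?_)
  obtain rfl := mem_colorClass.1 hx
  rw [hf.lt_hi_iff_card_le (hi.nonempty_below rfl), hi.card_below x rfl]
  omega

lemma IsAntitone.card_lt_lo (hf : H.IsAntitone f) (hi : H.IsMinuscule i) :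
    #{x ∈ H.colorClass i | h < H.lo f x} = #{z ∈ H.neighbors i | h < f z} / 2 := by
  have hle := hi.card_filter_neighbors_le (h < f ·)
  rw [← card_index_lt (i := i) (H := H) (m := #{z ∈ H.neighbors i | h < f z} / 2) (by omega)]
  refine congrArg _ (Finset.filter_congr fun x hx => ?_)
  obtain rfl := mem_colorClass.1 hx
  rw [hf.lt_lo_iff_card_lt, hi.card_below x rfl]
  omega

end ColoredHeap

namespace ColoredHeap

open scoped Finset

lemma multiset_eq_of_countP_lt_eq {s t : Multiset ℕ} (hcard : s.card = t.card)
    (hlt : ∀ n, s.countP (n < ·) = t.countP (n < ·)) : s = t := by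
  have hsplit : ∀ (u : Multiset ℕ) n, u.countP (n ≤ ·) = u.count n + u.countP (n < ·) :=
    fun u n => by
      induction u using Multiset.induction_on with
      | empty => rfl
      | cons m u ih =>
        rw [Multiset.countP_cons, Multiset.count_cons, Multiset.countP_cons, ih]
        split_ifs <;> omega
  have hle : ∀ n, s.countP (n ≤ ·) = t.countP (n ≤ ·) := fun n => by
    cases n with
    | zero => simpa [Multiset.countP_eq_card_filter] using hcard
    | succ n => exact hlt n
  refine Multiset.ext.2 fun n => ?_
  have := hle n
  rw [hsplit, hsplit, hlt] at this
  exact Nat.add_right_cancel this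

variable {M Q : Type*} [DecidableEq M] {G : SimpleGraph M} [DecidableRel G.Adj] [Fintype Q]
  {H : ColoredHeap G Q} {f : Q → ℕ} {i j : M} {h : ℕ}

lemma IsAntitone.sum_lo_add_hi (hf : H.IsAntitone f) (hi : H.IsMinuscule i) (φ : ℕ → ℤ) :
    ∑ x ∈ H.colorClass i, (φ (H.lo f x) + φ (H.hi f x)) = ∑ z ∈ H.neighbors i, φ (f z) := by
  have hmap : (H.colorClass i).val.map (H.lo f) + (H.colorClass i).val.map (H.hi f) =
      (H.neighbors i).val.map f := by
    refine multiset_eq_of_countP_lt_eq ?_ fun n => ?_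
    · simpa [← two_mul] using hi.card_neighbors.symm
    · rw [Multiset.countP_add, Multiset.countP_map, Multiset.countP_map, Multiset.countP_map]
      have hlo := hf.card_lt_lo hi (h := n)
      have hhi := hf.card_lt_hi hi (h := n)
      rw [Finset.card_def, Finset.filter_val] at hlo hhi
      rw [hlo, hhi, ← Finset.filter_val, ← Finset.card_def]
      omega
  rw [Finset.sum_add_distrib]
  simpa using congrArg (fun m => (m.map φ).sum) hmap

variable (H) in
/-- The weight at color `i` of the labelling `f`, where a label `n` contributes `φ n`. -/
def weight (φ : ℕ → ℤ) (f : Q → ℕ) (i : M) : ℤ := ∑ x, cartan G i (H.color x) * φ (f x)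

lemma weight_eq_sub (φ : ℕ → ℤ) (f : Q → ℕ) (i : M) :
    H.weight φ f i = ∑ x ∈ H.colorClass i, 2 * φ (f x) - ∑ z ∈ H.neighbors i, φ (f z) := by
  rw [weight, colorClass, neighbors, Finset.sum_filter, Finset.sum_filter,
    ← Finset.sum_sub_distrib]
  refine Finset.sum_congr rfl fun x _ => ?_
  by_cases hx : H.color x = i
  · simp [cartan, hx]
  · by_cases hadj : G.Adj i (H.color x) <;> simp [cartan, hx, Ne.symm hx, hadj]

lemma IsAntitone.weight_eq (hf : H.IsAntitone f) (hi : H.IsMinuscule i) (φ : ℕ → ℤ) :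
    H.weight φ f i =
      ∑ x ∈ H.colorClass i, (2 * φ (f x) - φ (H.lo f x) - φ (H.hi f x)) := by
  rw [weight_eq_sub, ← hf.sum_lo_add_hi hi, ← Finset.sum_sub_distrib]
  exact Finset.sum_congr rfl fun x _ => by ring

end ColoredHeap

namespace ColoredHeap

open scoped Finset

variable {M Q : Type*} [DecidableEq M] {G : SimpleGraph M} [DecidableRel G.Adj] [Fintype Q]

section Tails

variable (H : ColoredHeap G Q)

/-- The contribution of the labels exceeding `h` at level `h` to the weight of `f` at color `i`:
the weight of the order filter `{x | h < f x}`. -/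
def weightAt (h : ℕ) (f : Q → ℕ) (i : M) : ℤ := H.weight (fun n => if h < n then 1 else 0) f i

/-- The weight at color `i` of the part of `f` above the level `h`. -/
def weightAbove (h : ℕ) (f : Q → ℕ) (i : M) : ℤ := H.weight (fun n => (n - h : ℕ)) f i

variable {H} {f : Q → ℕ} {i j : M} {x : Q} {h h' : ℕ}

lemma weightAbove_eq_add_succ (h : ℕ) (f : Q → ℕ) (i : M) :
    H.weightAbove h f i = H.weightAt h f i + H.weightAbove (h + 1) f i := by
  rw [weightAbove, weightAt, weightAbove, weight, weight, weight, ← Finset.sum_add_distrib]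
  refine Finset.sum_congr rfl fun x _ => ?_
  rw [← mul_add]
  split_ifs <;> congr 1 <;> omega

lemma weightAbove_eq_zero (hle : ∀ x, f x ≤ h) : H.weightAbove h f i = 0 :=
  Finset.sum_eq_zero fun x _ => by simp [Nat.sub_eq_zero_of_le (hle x)]

lemma IsAntitone.weightAt_eq (hf : H.IsAntitone f) (hi : H.IsMinuscule i) (h : ℕ) :
    H.weightAt h f i = 2 * (#{x ∈ H.colorClass i | h < f x} : ℤ) -
      #{x ∈ H.colorClass i | h < H.lo f x} - #{x ∈ H.colorClass i | h < H.hi f x} := by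
  simp only [weightAt, hf.weight_eq hi, Finset.card_filter, Finset.sum_sub_distrib,
    ← Finset.mul_sum, Nat.cast_sum, Nat.cast_ite, Nat.cast_one, Nat.cast_zero]

lemma IsAntitone.card_lt_hi_le (hf : H.IsAntitone f) (hi : H.IsMinuscule i) :
    #{x ∈ H.colorClass i | h < H.hi f x} ≤ #{x ∈ H.colorClass i | h < H.lo f x} + 1 := by
  rw [hf.card_lt_hi hi, hf.card_lt_lo hi]
  omega

lemma IsAntitone.filter_lt_lo_subset (hf : H.IsAntitone f) :
    ({x ∈ H.colorClass i | h < H.lo f x} : Finset Q) ⊆ {x ∈ H.colorClass i | h < f x} :=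
  Finset.monotone_filter_right _ fun _ _ hlt => hlt.trans_le hf.lo_le

lemma IsAntitone.filter_lt_subset (hf : H.IsAntitone f) (hi : H.IsMinuscule i) :
    ({x ∈ H.colorClass i | h < f x} : Finset Q) ⊆ {x ∈ H.colorClass i | h < H.hi f x} :=
  Finset.monotone_filter_right _ fun _ hx hlt =>
    hlt.trans_le (hf.le_hi (hi.nonempty_below (mem_colorClass.1 hx)))

lemma IsAntitone.neg_one_le_weightAt (hf : H.IsAntitone f) (hi : H.IsMinuscule i) (h : ℕ) :
    -1 ≤ H.weightAt h f i := by
  have hlo := Finset.card_le_card (hf.filter_lt_lo_subset (i := i) (h := h))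
  have hhi := hf.card_lt_hi_le hi (h := h)
  rw [hf.weightAt_eq hi]
  omega

lemma IsAntitone.lt_lo_of_weightAt (hf : H.IsAntitone f) (hi : H.IsMinuscule i)
    (hneg : H.weightAt h f i = -1) (hx : H.color x = i) (hlt : h < f x) : h < H.lo f x := by
  have hlo := Finset.card_le_card (hf.filter_lt_lo_subset (i := i) (h := h))
  have hhi := hf.card_lt_hi_le hi (h := h)
  rw [hf.weightAt_eq hi] at hneg
  have heq := Finset.eq_of_subset_of_card_le (hf.filter_lt_lo_subset (i := i) (h := h)) (by omega)
  have hmem : x ∈ ({x ∈ H.colorClass i | h < f x} : Finset Q) :=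
    Finset.mem_filter.2 ⟨mem_colorClass.2 hx, hlt⟩
  rw [← heq] at hmem
  exact (Finset.mem_filter.1 hmem).2

lemma IsAntitone.weightAt_of_le_of_lt_hi (hf : H.IsAntitone f) (hi : H.IsMinuscule (H.color x))
    (hle : f x ≤ h) (hlt : h < H.hi f x) : H.weightAt h f (H.color x) = -1 := by
  have hlo := Finset.card_le_card (hf.filter_lt_lo_subset (i := H.color x) (h := h))
  have hhi := hf.card_lt_hi_le hi (h := h)
  have hssub := Finset.card_lt_card ((Finset.ssubset_iff_of_subset (hf.filter_lt_subset hi)).2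
    ⟨x, Finset.mem_filter.2 ⟨mem_colorClass.2 rfl, hlt⟩, by simp [hle]⟩)
  rw [hf.weightAt_eq hi]
  omega

end Tails

section Reflection

variable (H : ColoredHeap G Q)

/-- The Bender–Knuth type involution on color `i` below the level `h`: each label of color `i` and
size at most `h` is reflected in the interval of values, truncated at `h`, available to it. -/
def reflectBelow (i : M) (h : ℕ) (f : Q → ℕ) (x : Q) : ℕ :=
  if H.color x = i ∧ f x ≤ h then H.lo f x + min (H.hi f x) h - f x else f x

variable {H} {f : Q → ℕ} {i j : M} {x : Q} {h h' : ℕ}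

lemma reflectBelow_of_ne (hx : H.color x ≠ i) : H.reflectBelow i h f x = f x :=
  if_neg fun hxi => hx hxi.1

lemma reflectBelow_of_eq (hx : H.color x = i) : H.reflectBelow i h f x =
    if f x ≤ h then H.lo f x + min (H.hi f x) h - f x else f x := by
  simp only [reflectBelow, hx, true_and]

lemma IsAntitone.reflectBelow (hf : H.IsAntitone f) (hi : H.IsMinuscule i) :
    H.IsAntitone (H.reflectBelow i h f) := by
  refine (hf.isAntitone_iff_of_eq_off hi fun z hz => reflectBelow_of_ne hz).2 fun x hx => ?_
  have hlo := hf.lo_le (x := x)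
  have hhi := hf.le_hi (hi.nonempty_below hx)
  rw [reflectBelow_of_eq hx]
  split_ifs <;> omega

lemma IsAntitone.reflectBelow_reflectBelow (hf : H.IsAntitone f) (hi : H.IsMinuscule i) :
    H.reflectBelow i h (H.reflectBelow i h f) = f := by
  funext x
  by_cases hx : H.color x = i
  · subst hx
    have hlo := hf.lo_le (x := x)
    have hhi := hf.le_hi (hi.nonempty_below rfl)
    have hoff : ∀ z, H.color z ≠ H.color x → H.reflectBelow (H.color x) h f z = f z :=
      fun z hz => reflectBelow_of_ne hz
    rw [reflectBelow_of_eq rfl, lo_congr hoff, hi_congr hoff, reflectBelow_of_eq rfl]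
    split_ifs <;> omega
  · rw [reflectBelow_of_ne hx, reflectBelow_of_ne hx]

lemma IsAntitone.weightAbove_reflectBelow (hf : H.IsAntitone f) (hh : h ≤ h') :
    H.weightAbove h' (H.reflectBelow i h f) j = H.weightAbove h' f j := by
  refine Finset.sum_congr rfl fun x _ => ?_
  have hlo := hf.lo_le (x := x)
  rw [ColoredHeap.reflectBelow]
  split_ifs with hx
  · have hzero : H.lo f x + min (H.hi f x) h - f x - h' = f x - h' := by omega
    simp only [hzero]
  · rfl

lemma IsAntitone.reflectBelow_sub_self (hf : H.IsAntitone f) (hi : H.IsMinuscule (H.color x))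
    (hgap : h < f x → h < H.lo f x) : (H.reflectBelow (H.color x) h f x : ℤ) - f x =
      -((2 * ((f x - 0 : ℕ) : ℤ) - (H.lo f x - 0 : ℕ) - (H.hi f x - 0 : ℕ)) -
        (2 * ((f x - h : ℕ) : ℤ) - (H.lo f x - h : ℕ) - (H.hi f x - h : ℕ))) := by
  have hlo := hf.lo_le (x := x)
  have hhi := hf.le_hi (hi.nonempty_below rfl)
  rw [reflectBelow_of_eq rfl]
  split_ifs <;> omega

/-- For `h` above all labels this is the action of a simple reflection on weights; the case of a
smaller `h` serves the sign-reversing involution. -/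
lemma IsAntitone.weightAbove_zero_reflectBelow (hf : H.IsAntitone f) (hi : H.IsMinuscule i)
    (hgap : ∀ x, H.color x = i → h < f x → h < H.lo f x) (j : M) :
    H.weightAbove 0 (H.reflectBelow i h f) j = H.weightAbove 0 f j -
      cartan G j i * (H.weightAbove 0 f i - H.weightAbove h f i) := by
  have hsum : H.weightAbove 0 (H.reflectBelow i h f) j - H.weightAbove 0 f j =
      ∑ x ∈ H.colorClass i, cartan G j i * ((H.reflectBelow i h f x : ℤ) - f x) := by
    rw [weightAbove, weightAbove, weight, weight, ← Finset.sum_sub_distrib, colorClass,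
      Finset.sum_filter]
    refine Finset.sum_congr rfl fun x _ => ?_
    rw [← mul_sub]
    split_ifs with hx
    · rw [hx, Nat.sub_zero, Nat.sub_zero]
    · rw [reflectBelow_of_ne hx, sub_self, mul_zero]
  have hrefl : ∑ x ∈ H.colorClass i, ((H.reflectBelow i h f x : ℤ) - f x) =
      -(H.weightAbove 0 f i - H.weightAbove h f i) := by
    rw [weightAbove, weightAbove, hf.weight_eq hi, hf.weight_eq hi, ← Finset.sum_sub_distrib,
      ← Finset.sum_neg_distrib]
    refine Finset.sum_congr rfl fun x hx => ?_
    obtain rfl := mem_colorClass.1 hx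
    exact hf.reflectBelow_sub_self hi (hgap x rfl)
  rw [← Finset.mul_sum, hrefl] at hsum
  linarith

end Reflection

end ColoredHeap

namespace ColoredHeap

open scoped Finset

variable {N : Type} [DecidableEq N] {Q : Type*} [Fintype Q] {G : SimpleGraph (Option N)}
  [DecidableRel G.Adj] (H : ColoredHeap G Q)

section Dominance

/-- A labelling is dominant if the parts of it above each level have dominant weights. The color
`none` is frozen and carries no weight. -/
def Dominant (f : Q → ℕ) : Prop := ∀ h i, 0 ≤ H.weightAbove h f (some i)

/-- The places where dominance first fails, coming down from the top level. -/
def breaks (f : Q → ℕ) : Set (ℕ × N) :=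
  {p | H.weightAbove p.1 f (some p.2) < 0 ∧ ∀ h > p.1, ∀ i, 0 ≤ H.weightAbove h f (some i)}

variable {H} {f f' g : Q → ℕ} {i : N} {p : ℕ × N}

lemma breaks_nonempty (hf : ¬H.Dominant f) : (H.breaks f).Nonempty := by
  let S : Set ℕ := {h | ∃ i, H.weightAbove h f (some i) < 0}
  have hne : S.Nonempty := by
    simp only [Dominant, not_forall, not_le] at hf
    exact hf
  have hbdd : BddAbove S := by
    refine ⟨Finset.univ.sup f, ?_⟩
    rintro h ⟨i, hi⟩
    by_contra! hlt
    refine hi.ne (weightAbove_eq_zero fun x => ?_)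
    exact (Finset.le_sup (Finset.mem_univ x)).trans hlt.le
  obtain ⟨i, hi⟩ := Nat.sSup_mem hne hbdd
  refine ⟨(sSup S, i), hi, fun h hh j => ?_⟩
  by_contra! hneg
  exact (le_csSup hbdd ⟨j, hneg⟩).not_gt hh

lemma not_dominant_of_mem_breaks (hp : p ∈ H.breaks f) : ¬H.Dominant f := fun hf =>
  (hf p.1 p.2).not_gt hp.1

lemma breaks_congr (hp : p ∈ H.breaks f)
    (hff' : ∀ h ≥ p.1, ∀ i, H.weightAbove h f' (some i) = H.weightAbove h f (some i)) :
    H.breaks f' = H.breaks f := by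
  have hp' : p ∈ H.breaks f' :=
    ⟨hff' p.1 le_rfl p.2 ▸ hp.1, fun h hh i => hff' h hh.le i ▸ hp.2 h hh i⟩
  have hlevel : ∀ {k : Q → ℕ} {q : ℕ × N}, p ∈ H.breaks k → q ∈ H.breaks k → p.1 = q.1 := by
    intro k q hp hq
    by_contra hne
    rcases Nat.lt_or_gt_of_ne hne with hlt | hlt
    exacts [(hp.2 _ hlt _).not_gt hq.1, (hq.2 _ hlt _).not_gt hp.1]
  ext q
  constructor <;> intro hq
  · have hpq := hlevel hp' hq
    exact ⟨hff' q.1 hpq.le q.2 ▸ hq.1, fun h hh i => hff' h (hpq ▸ hh.le) i ▸ hq.2 h hh i⟩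
  · have hpq := hlevel hp hq
    exact ⟨(hff' q.1 hpq.le q.2).symm ▸ hq.1,
      fun h hh i => (hff' h (hpq ▸ hh.le) i).symm ▸ hq.2 h hh i⟩

lemma IsAntitone.weight_of_mem_breaks (hf : H.IsAntitone f)
    (hH : H.IsMinuscule (some p.2)) (hp : p ∈ H.breaks f) :
    H.weightAt p.1 f (some p.2) = -1 ∧ H.weightAbove p.1 f (some p.2) = -1 := by
  have hneg := hp.1
  have hnonneg := hp.2 (p.1 + 1) (Nat.lt_succ_self _) p.2
  have hle := hf.neg_one_le_weightAt hH p.1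
  rw [weightAbove_eq_add_succ] at hneg ⊢
  omega

end Dominance

section Highest

variable {H} {f g : Q → ℕ}

variable (H) in
/-- The highest labelling with given frozen labels: every other label is copied from a preceding
neighbor, and the weight is supported, level by level, on colors without smaller labels. -/
structure IsHighest (g : Q → ℕ) : Prop where
  exists_before : ∀ x, H.color x ≠ none → ∃ z, H.Before z x ∧ g z ≤ g x
  dominant : H.Dominant g
  weightAbove_eq_zero : ∀ h x i, H.color x = some i → g x ≤ h → H.weightAbove h g (some i) = 0

lemma IsHighest.le (hg : H.IsHighest g) (hf : H.IsAntitone f)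
    (hfg : ∀ x, H.color x = none → f x = g x) (x : Q) : f x ≤ g x := by
  induction hn : H.rank x using Nat.strong_induction_on generalizing x with
  | _ n ih =>
    by_cases hx : H.color x = none
    · exact (hfg x hx).le
    · obtain ⟨z, hz, hgz⟩ := hg.exists_before x hx
      exact ((hf z x hz).trans (ih _ (hn ▸ hz.2) z rfl)).trans hgz

/-- At a position of least rank violating the conclusion, the part of `f` above `h` would have
negative weight. -/
lemma IsHighest.sub_eq_sub_of_succ (hg : H.IsHighest g) (hga : H.IsAntitone g)
    (hf : H.IsAntitone f) (hH : ∀ i, H.IsMinuscule (some i)) (hdom : H.Dominant f)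
    (hfg : ∀ x, H.color x = none → f x = g x) {h : ℕ}
    (hsucc : ∀ x, f x - (h + 1) = g x - (h + 1)) (x : Q) : f x - h = g x - h := by
  induction hn : H.rank x using Nat.strong_induction_on generalizing x with
  | _ n ih =>
    by_contra hne
    have hle := hg.le hf hfg x
    have hx := hsucc x
    obtain ⟨i, hi⟩ : ∃ i, H.color x = some i :=
      Option.ne_none_iff_exists'.1 fun hnone => hne (by rw [hfg x hnone])
    have hmin := hi ▸ hH i
    have hlt_hi : h < H.hi f x := (le_hi_iff (hmin.nonempty_below rfl)).2 fun z hz => by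
      have := ih _ (hn ▸ hz.2) z rfl
      have := hga z x hz
      omega
    have hAt := hf.weightAt_of_le_of_lt_hi hmin (by omega) hlt_hi
    have hAbove : H.weightAbove (h + 1) f (some i) = 0 := by
      rw [← hg.weightAbove_eq_zero (h + 1) x i hi (by omega)]
      exact Finset.sum_congr rfl fun y _ => by simp only [hsucc y]
    have hnonneg := hdom h i
    rw [weightAbove_eq_add_succ, hAbove, ← hi, hAt] at hnonneg
    omega

lemma IsHighest.eq_of_dominant (hg : H.IsHighest g) (hga : H.IsAntitone g)
    (hf : H.IsAntitone f) (hH : ∀ i, H.IsMinuscule (some i)) (hdom : H.Dominant f)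
    (hfg : ∀ x, H.color x = none → f x = g x) : f = g := by
  have hsub : ∀ n h, Finset.univ.sup g ≤ h + n → ∀ x, f x - h = g x - h := by
    intro n
    induction n with
    | zero =>
      intro h hh x
      have := hg.le hf hfg x
      have := (Finset.le_sup (f := g) (Finset.mem_univ x)).trans hh
      omega
    | succ n ih =>
      exact fun h hh => hg.sub_eq_sub_of_succ hga hf hH hdom hfg (ih (h + 1) (by omega))
  exact funext fun x => hsub _ 0 (Nat.zero_add _).ge x

end Highest

section Labelling

/-- The order-reversing labellings with prescribed labels `v` on the frozen positions. -/
def Labelling (v : Q → ℕ) : Type _ :=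
  {f : Q → ℕ // H.IsAntitone f ∧ ∀ x, H.color x = none → f x = v x}

namespace Labelling

variable {H} {v : Q → ℕ}

/-- The weight of a labelling, a vector indexed by the colors that are not frozen. -/
def wt (f : H.Labelling v) (i : N) : ℤ := H.weightAbove 0 f.1 (some i)

/-- The involution `reflectBelow` on labellings. -/
def reflect (hH : ∀ i, H.IsMinuscule (some i)) (i : N) (h : ℕ) (f : H.Labelling v) :
    H.Labelling v :=
  ⟨H.reflectBelow (some i) h f.1, f.2.1.reflectBelow (hH i), fun x hx => by
    rw [reflectBelow_of_ne (by simp [hx]), f.2.2 x hx]⟩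

variable (hH : ∀ i, H.IsMinuscule (some i))

lemma reflect_involutive (i : N) (h : ℕ) :
    Function.Involutive (reflect hH i h : H.Labelling v → H.Labelling v) := fun f =>
  Subtype.ext (f.2.1.reflectBelow_reflectBelow (hH i))

lemma exists_perm_wt_eq_refl_mulVec [Fintype N] [Finite (H.Labelling v)]
    (hH : ∀ i, H.IsMinuscule (some i)) (i : N) :
    ∃ σ : Equiv.Perm (H.Labelling v),
      ∀ f, (σ f).wt = (CL.refl (fun i j => cartan G (some i) (some j)) i).mulVec f.wt := by
  obtain ⟨K, hK⟩ := (Set.finite_range fun p : H.Labelling v × Q => p.1.1 p.2).bddAbove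
  have hle : ∀ (f : H.Labelling v) x, f.1 x ≤ K := fun f x => hK ⟨(f, x), rfl⟩
  refine ⟨Function.Involutive.toPerm (reflect hH i K) (reflect_involutive hH i K), fun f => ?_⟩
  funext j
  rw [CL.refl_mulVec_apply, Function.Involutive.coe_toPerm, wt, reflect,
    f.2.1.weightAbove_zero_reflectBelow (hH i) (fun x _ hx => absurd hx (hle f x).not_gt),
    weightAbove_eq_zero (hle f), sub_zero, wt, wt, cartan_comm]

section Flip

variable {f : H.Labelling v} (hf : (H.breaks f.1).Nonempty)

/-- The sign-reversing involution on the labellings that are not dominant. All breaks have the same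
level, and any fixed choice among them works since `flip` preserves the set of breaks. -/
def flip : H.Labelling v := reflect hH hf.some.2 hf.some.1 f

lemma breaks_flip : H.breaks (flip hH hf).1 = H.breaks f.1 :=
  breaks_congr hf.some_mem fun _ hh _ => f.2.1.weightAbove_reflectBelow hh

lemma flip_flip (hf' : (H.breaks (flip hH hf).1).Nonempty) : flip hH hf' = f := by
  have hsome : ∀ {s t : Set (ℕ × N)} (hs : s.Nonempty) (ht : t.Nonempty), s = t →
      hs.some = ht.some := by
    rintro s _ hs ht rfl
    rfl
  rw [flip, hsome hf' hf (breaks_flip hH hf)]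
  exact reflect_involutive hH _ _ f

lemma one_add_wt_flip [Fintype N] : 1 + (flip hH hf).wt =
    (CL.refl (fun i j => cartan G (some i) (some j)) hf.some.2).mulVec (1 + f.wt) := by
  obtain ⟨hAt, hAbove⟩ := f.2.1.weight_of_mem_breaks (hH _) hf.some_mem
  funext j
  rw [CL.refl_mulVec_apply, Pi.add_apply, Pi.add_apply, Pi.add_apply, wt, flip, reflect,
    f.2.1.weightAbove_zero_reflectBelow (hH _)
      (fun x hx => f.2.1.lt_lo_of_weightAt (hH _) hAt hx), hAbove, wt, wt, cartan_comm]
  simp only [Pi.one_apply]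
  ring

end Flip

variable [Fintype N] [Fintype (H.Labelling v)] {A : N → N → ℤ}

lemma sum_alt_one_add_wt (hH : ∀ i, H.IsMinuscule (some i))
    (hA : A = fun i j => cartan G (some i) (some j))
    (hW : (CL.weyl A : Set (Matrix N N ℤ)).Finite) (g : H.Labelling v)
    (hg : ∀ f : H.Labelling v, H.Dominant f.1 ↔ f = g) :
    ∑ f : H.Labelling v, CL.alt A (1 + f.wt) = CL.alt A (1 + g.wt) := by
  classical
  have hbreaks : ∀ f ∈ Finset.univ.erase g, (H.breaks f.1).Nonempty := fun f hf =>
    breaks_nonempty (mt (hg f).1 (Finset.ne_of_mem_erase hf))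
  have hneg : ∀ f hf, CL.alt A (1 + (flip hH (hbreaks f hf)).wt) = -CL.alt A (1 + f.wt) := by
    subst hA
    intro f hf
    rw [one_add_wt_flip, CL.alt_refl_mulVec hW (cartan_self G _)]
  rw [← Finset.add_sum_erase _ _ (Finset.mem_univ g), add_eq_left]
  refine Finset.sum_involution (fun f hf => flip hH (hbreaks f hf)) (fun f hf => ?_)
    (fun f hf hne heq => hne ?_) (fun f hf => ?_) (fun f hf => flip_flip hH (hbreaks f hf) _)
  · rw [hneg f hf, add_neg_cancel]
  · have := hneg f hf
    rw [heq] at this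
    ext ν
    have hν := congrArg (fun p => p.coeff ν) this
    simp only [AddMonoidAlgebra.coeff_neg, Finsupp.neg_apply] at hν
    simp only [AddMonoidAlgebra.coeff_zero, Finsupp.zero_apply]
    omega
  · refine Finset.mem_erase.2 ⟨fun heq => ?_, Finset.mem_univ _⟩
    have hne : (H.breaks (flip hH (hbreaks f hf)).1).Nonempty :=
      (breaks_flip hH (hbreaks f hf)).symm ▸ hbreaks f hf
    exact not_dominant_of_mem_breaks hne.some_mem ((hg _).2 heq)

theorem alt_one_mul_sum_single_wt (hH : ∀ i, H.IsMinuscule (some i))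
    (hA : A = fun i j => cartan G (some i) (some j))
    (hW : (CL.weyl A : Set (Matrix N N ℤ)).Finite) (g : H.Labelling v) (hg : H.IsHighest g.1) :
    CL.alt A 1 * ∑ f : H.Labelling v, AddMonoidAlgebra.single f.wt 1 =
      CL.alt A (1 + g.wt) := by
  have hdom : ∀ f : H.Labelling v, H.Dominant f.1 ↔ f = g := fun f =>
    ⟨fun hf => Subtype.ext (hg.eq_of_dominant g.2.1 f.2.1 hH hf fun x hx => by
      rw [f.2.2 x hx, g.2.2 x hx]), fun hfg => hfg ▸ hg.dominant⟩
  rw [CL.alt_mul_sum_single hW (hA ▸ exists_perm_wt_eq_refl_mulVec hH),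
    sum_alt_one_add_wt hH hA hW g hdom]

end Labelling

end Labelling

end ColoredHeap

namespace E6

open CL

lemma dotProduct_mulVec_A6 (x : N6 → ℤ) : 6 * (x ⬝ᵥ (Matrix.of A6).mulVec x) =
    3 * (2 * x m1 - x m2) ^ 2 + (3 * x m2 - 2 * x m3) ^ 2 + 3 * (2 * x m4 - x m3) ^ 2 +
      3 * (2 * x m6 - x m5) ^ 2 + (3 * x m5 - 2 * x m3) ^ 2 + x m3 ^ 2 := by
  have hsum : ∀ F : N6 → ℤ, ∑ i, F i = F m1 + F m2 + F m3 + F m4 + F m5 + F m6 := fun F => by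
    rw [show (Finset.univ : Finset N6) = {m1, m2, m3, m4, m5, m6} from rfl]
    simp [add_assoc]
  simp only [dotProduct, Matrix.mulVec, Matrix.of_apply, hsum, A6, adj6]
  simp
  ring

lemma weyl_A6_finite : (weyl A6 : Set (Matrix N6 N6 ℤ)).Finite := by
  refine weyl_finite (c := 12) (by decide) (by decide) fun x l => ?_
  have hsq := dotProduct_mulVec_A6 x
  cases l <;> nlinarith [sq_nonneg (x m3), sq_nonneg (2 * x m1 - x m2),
    sq_nonneg (3 * x m2 - 2 * x m3), sq_nonneg (2 * x m4 - x m3), sq_nonneg (2 * x m6 - x m5),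
    sq_nonneg (3 * x m5 - 2 * x m3), sq_nonneg (3 * x m2 - 4 * x m3), sq_nonneg (x m1 - x m2),
    sq_nonneg (x m4 - x m3), sq_nonneg (x m6 - x m5), sq_nonneg (3 * x m5 - 4 * x m3)]

/-- The `E₇` Dynkin diagram: the `E₆` diagram together with a node `none` attached to `1'`. -/
def e7 : SimpleGraph (Option N6) where
  Adj
    | some i, some j => adj6 i j
    | some i, none => i = m1
    | none, some j => j = m1
    | none, none => False
  symm := ⟨by rintro (_ | i) (_ | j) <;> [exact id; exact id; exact id; exact Or.symm]⟩
  loopless := ⟨by rintro (_ | i) <;> [exact id; cases i <;> decide]⟩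

instance : DecidableRel e7.Adj
  | some i, some j => inferInstanceAs (Decidable (adj6 i j))
  | some i, none => inferInstanceAs (Decidable (i = m1))
  | none, some j => inferInstanceAs (Decidable (j = m1))
  | none, none => inferInstanceAs (Decidable False)

lemma A6_eq_cartan : A6 = fun i j => cartan e7 (some i) (some j) := by
  funext i j
  revert i j
  decide

/-- The minuscule heap of type `E₇`: the poset `P24` with ranks shifted by one, together with three
positions of color `none` and ranks `0`, `8`, `16`. -/
def heap : ColoredHeap e7 ({x : N6 × ℕ // x ∈ pos24} ⊕ Fin 3) where
  color := Sum.elim (fun x => some x.1.1) fun _ => none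
  rank := Sum.elim (fun x => x.1.2 + 1) fun j => 8 * j
  eq_of_rank_eq := by decide +kernel
  rank_ne_of_adj := by decide +kernel

lemma color_inl (x : {x : N6 × ℕ // x ∈ pos24}) : heap.color (.inl x) = some x.1.1 := rfl

lemma color_inr (j : Fin 3) : heap.color (.inr j) = none := rfl

lemma isMinuscule_heap (i : N6) : heap.IsMinuscule (some i) where
  card_below := by revert i; decide +kernel
  card_neighbors := by revert i; decide +kernel

section TopLabelling

/-- The labels of the three positions of color `none`. -/
def frozen (a b : ℕ) : Fin 3 → ℕ := ![a + b, a, 0]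

/-- The position of color `none` from which the highest labelling copies the label of `x`: the
second one for the positions above `(1',8)` in `P24`, the first one for the others. -/
def source : {x : N6 × ℕ // x ∈ pos24} ⊕ Fin 3 → Fin 3 :=
  Sum.elim (fun x => if x.1 ∈ ([(m1, 8), (m2, 9), (m3, 10), (m4, 11), (m5, 11), (m3, 12), (m2, 13),
    (m1, 14)] : List (N6 × ℕ)) then 1 else 0) id

/-- The highest labelling with the given frozen labels. -/
def topLabel (a b : ℕ) (x : {x : N6 × ℕ // x ∈ pos24} ⊕ Fin 3) : ℕ := frozen a b (source x)

variable (a b : ℕ)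

lemma antitone_frozen : Antitone (frozen a b) :=
  Fin.antitone_iff_succ_le.2 <| Fin.forall_fin_two.2 ⟨Nat.le_add_right a b, Nat.zero_le a⟩

lemma isAntitone_topLabel : heap.IsAntitone (topLabel a b) := by
  have hsource : ∀ x y, heap.Before x y → source x ≤ source y := by decide +kernel
  exact fun x y hxy => antitone_frozen a b (hsource x y hxy)

lemma weight_topLabel (φ : ℕ → ℤ) (i : N6) : heap.weight φ (topLabel a b) (some i) =
    if i = m1 then φ a - φ 0 else if i = m6 then φ (a + b) - φ a else 0 := by
  have hsum : ∀ (i : N6) (j : Fin 3), ∑ x with source x = j, cartan e7 (some i) (heap.color x) =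
      if i = m1 then ![0, 1, -1] j else if i = m6 then ![1, -1, 0] j else 0 := by
    decide +kernel
  have hfiber : heap.weight φ (topLabel a b) (some i) = ∑ j : Fin 3,
      (∑ x with source x = j, cartan e7 (some i) (heap.color x)) * φ (frozen a b j) := by
    rw [ColoredHeap.weight, ← Finset.sum_fiberwise _ source]
    refine Finset.sum_congr rfl fun j _ => ?_
    rw [Finset.sum_mul]
    exact Finset.sum_congr rfl fun x hx => by rw [topLabel, (Finset.mem_filter.1 hx).2]
  rw [hfiber]
  simp only [hsum, Fin.sum_univ_three, frozen]
  split_ifs <;> simp [sub_eq_add_neg]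

lemma isHighest_topLabel : heap.IsHighest (topLabel a b) where
  exists_before := by
    have hsource : ∀ x, heap.color x ≠ none → ∃ z, heap.Before z x ∧ source z = source x := by
      decide +kernel
    intro x hx
    obtain ⟨z, hz, hzx⟩ := hsource x hx
    exact ⟨z, hz, by rw [topLabel, topLabel, hzx]⟩
  dominant h i := by
    rw [ColoredHeap.weightAbove, weight_topLabel]
    split_ifs <;> omega
  weightAbove_eq_zero h x i hi hx := by
    have hsource : ∀ x, (heap.color x = some m1 → source x ≤ 1) ∧
        (heap.color x = some m6 → source x ≤ 0) := by
      decide +kernel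
    rw [ColoredHeap.weightAbove, weight_topLabel]
    split_ifs with h1 h6
    · have : a ≤ h := (antitone_frozen a b ((hsource x).1 (h1 ▸ hi))).trans hx
      omega
    · have : a + b ≤ h := (antitone_frozen a b ((hsource x).2 (h6 ▸ hi))).trans hx
      omega
    · rfl

end TopLabelling

section Lattice

set_option synthInstance.maxSize 512 in
lemma ple_of_rank_le (x y : {x : N6 × ℕ // x ∈ pos24}) (hadj : x.1.1 = y.1.1 ∨ adj6 x.1.1 y.1.1)
    (hle : x.1.2 ≤ y.1.2) : ple adj6 pos24 x.1 y.1 := by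
  have hbetween : ∀ x y : {x : N6 × ℕ // x ∈ pos24}, (x.1.1 = y.1.1 ∨ adj6 x.1.1 y.1.1) →
      x.1.2 ≤ y.1.2 → x = y ∨ (adj6 x.1.1 y.1.1 ∧ y.1.2 = x.1.2 + 1) ∨
        ∃ z : {x : N6 × ℕ // x ∈ pos24}, (x.1.1 = z.1.1 ∨ adj6 x.1.1 z.1.1) ∧
          (z.1.1 = y.1.1 ∨ adj6 z.1.1 y.1.1) ∧ x.1.2 < z.1.2 ∧ z.1.2 < y.1.2 := by
    decide +kernel
  induction hn : y.1.2 - x.1.2 using Nat.strong_induction_on generalizing x y with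
  | _ n ih =>
    rcases hbetween x y hadj hle with rfl | hstep | ⟨z, hxz, hzy, hlt, hlt'⟩
    · exact .refl
    · exact .single ⟨x.2, y.2, hstep⟩
    · exact (ih _ (by omega) x z hxz hlt.le rfl).trans (ih _ (by omega) z y hzy hlt'.le rfl)

variable {a b : ℕ} {c : {x : N6 × ℕ // x ∈ pos24} → ℕ}

lemma isAntitone_elim_of_elt (t : L6ab a b) : heap.IsAntitone (Sum.elim t.1 (frozen a b)) := by
  obtain ⟨c, hle, hanti, h8, h6⟩ := t
  have hbefore : ∀ x, (heap.Before (.inl x) (.inr 1) → x.1.1 = m1 ∧ x.1.2 ≤ 6) ∧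
      (heap.Before (.inr 1) (.inl x) → x.1.1 = m1 ∧ 8 ≤ x.1.2) ∧
      ¬heap.Before (.inl x) (.inr 0) ∧ ¬heap.Before (.inr 2) (.inl x) := by
    decide +kernel
  rintro (x | j) (y | k) hxy
  · exact hanti y x (ple_of_rank_le x y (.inr hxy.1) (Nat.lt_of_succ_lt_succ hxy.2).le)
  · fin_cases k
    · exact absurd hxy (hbefore x).2.2.1
    · obtain ⟨hc, hr⟩ := (hbefore x).1 hxy
      exact h6.trans (hanti _ x (ple_of_rank_le x _ (.inl hc) hr))
    · exact Nat.zero_le _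
  · fin_cases j
    · exact hle y
    · obtain ⟨hc, hr⟩ := (hbefore y).2.1 hxy
      exact (hanti y _ (ple_of_rank_le _ y (.inl hc.symm) hr)).trans h8
    · exact absurd hxy (hbefore y).2.2.2
  · exact hxy.1.elim

lemma elim_eq_topLabel (x) (hx : heap.color x = none) :
    Sum.elim c (frozen a b) x = topLabel a b x := by
  rcases x with x | j
  · exact (Option.some_ne_none _ hx).elim
  · rfl

lemma le_of_ple (hc : heap.IsAntitone (Sum.elim c (frozen a b))) {p q : N6 × ℕ}
    (hpq : ple adj6 pos24 p q) (hp : p ∈ pos24) (hq : q ∈ pos24) : c ⟨q, hq⟩ ≤ c ⟨p, hp⟩ := by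
  induction hpq with
  | refl => exact le_rfl
  | tail _ hstep ih =>
    obtain ⟨hr, -, hadj, hrank⟩ := hstep
    exact (hc (.inl ⟨_, hr⟩) (.inl ⟨_, hq⟩)
      ⟨hadj, Nat.succ_lt_succ (hrank ▸ Nat.lt_succ_self _)⟩).trans (ih hr)

lemma mem_elt_of_isAntitone (hc : heap.IsAntitone (Sum.elim c (frozen a b))) :
    (∀ x, c x ≤ a + b) ∧ (∀ x y, ple adj6 pos24 y.1 x.1 → c x ≤ c y) ∧ extra6 a c := by
  refine ⟨fun x => ?_, fun x y hyx => le_of_ple hc hyx y.2 x.2,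
    hc (.inr 1) (.inl _) (by decide), hc (.inl _) (.inr 1) (by decide)⟩
  exact ((isHighest_topLabel a b).le hc elim_eq_topLabel (.inl x)).trans
    (antitone_frozen a b (Fin.zero_le _))

lemma exists_elt_iff :
    (∃ t : L6ab a b, t.1 = c) ↔ heap.IsAntitone (Sum.elim c (frozen a b)) :=
  ⟨fun ⟨t, ht⟩ => ht ▸ isAntitone_elim_of_elt t, fun hc => ⟨⟨c, mem_elt_of_isAntitone hc⟩, rfl⟩⟩

/-- The elements of `L6(a,b)` as the labellings of the heap with frozen labels `a + b`, `a` and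
`0`. -/
def eltEquivLabelling (a b : ℕ) : L6ab a b ≃ heap.Labelling (topLabel a b) where
  toFun t := ⟨Sum.elim t.1 (frozen a b), isAntitone_elim_of_elt t, elim_eq_topLabel⟩
  invFun f := ⟨f.1 ∘ .inl, mem_elt_of_isAntitone (by
    convert f.2.1 using 1
    funext x
    rcases x with x | j
    exacts [rfl, (f.2.2 (.inr j) rfl).symm])⟩
  left_inv _ := rfl
  right_inv f := Subtype.ext <| funext <| by
    rintro (x | j)
    exacts [rfl, (f.2.2 (.inr j) rfl).symm]

lemma eltEquivLabelling_val (t : L6ab a b) :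
    (eltEquivLabelling a b t).1 = Sum.elim t.1 (frozen a b) := rfl

instance : Fintype (heap.Labelling (topLabel a b)) := .ofEquiv _ (eltEquivLabelling a b)

lemma isColorBox (t : L6ab a b) (i : N6) :
    IsColorBox i t (heap.lo (Sum.elim t.1 (frozen a b)) ∘ .inl)
      (heap.hi (Sum.elim t.1 (frozen a b)) ∘ .inl) := by
  intro c hct
  rw [exists_elt_iff, (isAntitone_elim_of_elt t).isAntitone_iff_of_eq_off (isMinuscule_heap i)]
  · simp [color_inl, color_inr]
  · rintro (x | j) hx
    exacts [hct x (mt (congrArg some) hx), rfl]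

lemma mwt_eq_wt (t : L6ab a b) : (fun i => mwt i t) = (eltEquivLabelling a b t).wt := by
  funext i
  rw [(isColorBox t i).mwt_eq, ColoredHeap.Labelling.wt, ColoredHeap.weightAbove,
    (eltEquivLabelling a b t).2.1.weight_eq (isMinuscule_heap i), eltEquivLabelling_val,
    ColoredHeap.colorClass, Finset.sum_filter, Finset.sum_filter, Fintype.sum_sum_type]
  simp [color_inl, color_inr]

lemma wgf_eq_sum_labelling (a b : ℕ) : wgf adj6 pos24 (a + b) (extra6 a) =
    ∑ f : heap.Labelling (topLabel a b), AddMonoidAlgebra.single f.wt 1 :=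
  Fintype.sum_equiv (eltEquivLabelling a b) _ _ fun t => by rw [mwt_eq_wt]

end Lattice

end E6

/-- the Weyl group of `E₆` is finite and
`𝒜(Z^ϱ)·WGF(L6(a,b);Z) = 𝒜(Z^{aω₁'+bω₆'+ϱ})` in `ℤ[ℤ^6]`. -/
theorem statement_7 (a b : ℕ) :
    ((CL.weyl A6 : Set (Matrix N6 N6 ℤ)).Finite) ∧
    CL.alt A6 (fun _ => 1) * CL.wgf adj6 pos24 (a + b) (extra6 a) =
      CL.alt A6 (fun j =>
        (if j = m1 then (a : ℤ) else 0) + (if j = m6 then (b : ℤ) else 0) + 1) := by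
  let g : E6.heap.Labelling (E6.topLabel a b) :=
    ⟨E6.topLabel a b, E6.isAntitone_topLabel a b, fun _ _ => rfl⟩
  have hwt : (fun j => (if j = m1 then (a : ℤ) else 0) + (if j = m6 then (b : ℤ) else 0) + 1) =
      1 + g.wt := by
    funext j
    rw [Pi.add_apply, ColoredHeap.Labelling.wt, ColoredHeap.weightAbove, E6.weight_topLabel]
    cases j <;> simp [add_comm]
  refine ⟨E6.weyl_A6_finite, ?_⟩
  rw [E6.wgf_eq_sum_labelling, hwt]
  exact ColoredHeap.Labelling.alt_one_mul_sum_single_wt E6.isMinuscule_heap E6.A6_eq_cartan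
    E6.weyl_A6_finite g (E6.isHighest_topLabel a b)

end
end

section
/- Fix a nonnegative integer k and t ∈ L7(k). Let C(t) := {c ∈ L7(k) : c(x) = t(x) for every position x ∈ P7 of color 5, i.e., for x ∈ {(5,4),(5,8),(5,12)}}, regarded as a poset with the induced order and with each covering relation colored as in L7(k) (all such colors lie in {1,2,3,4,5',6'}). Let S(t) be the skew-tabular lattice with parameters n = 6, m = 9 and boundary functions β0, β1 given by β0(−8) = 0; β0(j) = t((5,12)) for −7 ≤ j ≤ −4; β0(j) = t((5,4)) for −3 ≤ j ≤ 0; β1(−1) = β1(0) = β1(1) = t((5,8)); β1(j) = k for 2 ≤ j ≤ 7. Then there is a bijection from C(t) onto S(t) that is an isomorphism of posets and carries covering relations of colors 1,2,3,4,5',6' to covering relations of colors 1,2,3,4,5,6, respectively. -/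
noncomputable section

/-! ### Type `E₇` data -/

/-- The nodes `1, 2, 3, 4, 5, 5', 6'` of the `E₇` Dynkin diagram. -/
inductive N7 : Type
  | n1 | n2 | n3 | n4 | n5 | n5p | n6p
  deriving DecidableEq

instance : Fintype N7 where
  elems := {N7.n1, N7.n2, N7.n3, N7.n4, N7.n5, N7.n5p, N7.n6p}
  complete := by intro x; cases x <;> decide

open N7

/-- Adjacency in the `E₇` Dynkin diagram: edges `1-2, 2-3, 3-4, 4-5, 4-5', 5'-6'`. -/
abbrev adj7 : N7 → N7 → Prop := fun a b =>
  (a, b) ∈ ([(n1, n2), (n2, n3), (n3, n4), (n4, n5), (n4, n5p), (n5p, n6p)] : List (N7 × N7)) ∨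
  (b, a) ∈ ([(n1, n2), (n2, n3), (n3, n4), (n4, n5), (n4, n5p), (n5p, n6p)] : List (N7 × N7))

/-- The 27 (color, rank) positions of the minuscule poset `P₇ = P_{E₇}(ω₁)`. -/
def pos7 : Finset (N7 × ℕ) :=
  {(n1, 0), (n2, 1), (n3, 2), (n4, 3), (n5, 4), (n5p, 4), (n4, 5), (n6p, 5), (n3, 6),
   (n5p, 6), (n2, 7), (n4, 7), (n1, 8), (n3, 8), (n5, 8), (n2, 9), (n4, 9), (n3, 10),
   (n5p, 10), (n4, 11), (n6p, 11), (n5, 12), (n5p, 12), (n4, 13), (n3, 14), (n2, 15), (n1, 16)}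

/-- The lattice `L7(k) = L_{E₇}(kω₁)` of order-reversing labellings of `P₇` by `{0,…,k}`. -/
abbrev L7 (k : ℕ) : Type := CL.Elt adj7 pos7 k (fun _ => True)

/-- The Cartan matrix of type `E₇`, indexed by the nodes. -/
def A7 : N7 → N7 → ℤ := fun i j => if i = j then 2 else if adj7 i j then -1 else 0

/-! ### Skew-tabular lattices -/

namespace ST

/-- Index positions of a GT parallelogram: rows `0,…,n+1`, row `i` having
columns `C_i = {i, i−1, …, i−(m−1)}`. -/
def Idx (n m : ℕ) : Type :=
  {p : ℕ × ℤ // p.1 ≤ n + 1 ∧ (p.1 : ℤ) - ((m : ℤ) - 1) ≤ p.2 ∧ p.2 ≤ (p.1 : ℤ)}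

/-- The skew-tabular lattice with boundary rows `β0` (row `0`) and `β1` (row `n+1`):
arrays of nonnegative integers weakly increasing along NW-to-SE and NE-to-SW diagonals. -/
def Elt (n m : ℕ) (β0 β1 : ℤ → ℕ) : Type :=
  {g : Idx n m → ℕ //
    (∀ p : Idx n m, p.1.1 = 0 → g p = β0 p.1.2) ∧
    (∀ p : Idx n m, p.1.1 = n + 1 → g p = β1 p.1.2) ∧
    (∀ p q : Idx n m, q.1.1 = p.1.1 + 1 → q.1.2 = p.1.2 → g q ≤ g p) ∧
    (∀ p q : Idx n m, q.1.1 = p.1.1 + 1 → q.1.2 = p.1.2 + 1 → g p ≤ g q)}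

variable {n m : ℕ} {β0 β1 : ℤ → ℕ}

/-- Componentwise comparison of arrays. -/
def le (r s : Elt n m β0 β1) : Prop := ∀ p, r.1 p ≤ s.1 p

/-- The covering edge of color `i`: exactly one entry, in row `i`, is increased by one. -/
def edge (i : ℕ) (r s : Elt n m β0 β1) : Prop :=
  ∃ p : Idx n m, p.1.1 = i ∧ s.1 p = r.1 p + 1 ∧ ∀ q, q ≠ p → s.1 q = r.1 q

/-- The entry of an array at `(i, j)` (junk value `0` outside the index set). -/
def ent (g : Elt n m β0 β1) (i : ℕ) (j : ℤ) : ℕ :=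
  if h : i ≤ n + 1 ∧ (i : ℤ) - ((m : ℤ) - 1) ≤ j ∧ j ≤ (i : ℤ) then g.1 ⟨(i, j), h⟩ else 0

/-- The rank function: the sum of all entries in rows `1,…,n`. -/
def rk (g : Elt n m β0 β1) : ℕ :=
  ∑ i ∈ Finset.range (n + 2), ∑ u ∈ Finset.range m,
    if 1 ≤ i ∧ i ≤ n then ent g i ((i : ℤ) - (u : ℤ)) else 0

/-- The connected component of `g` in the graph of color-`i` covering edges. -/
def comp (i : ℕ) (g : Elt n m β0 β1) : Set (Elt n m β0 β1) :=
  {s | Relation.ReflTransGen (fun x y => edge i x y ∨ edge i y x) g s}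

/-- The integer `m_i(g) = (ρ(g) − min ρ on comp_i(g)) − (max ρ on comp_i(g) − ρ(g))`. -/
def mwt (i : ℕ) (g : Elt n m β0 β1) : ℤ :=
  ((rk g : ℤ) - ((sInf (rk '' comp i g) : ℕ) : ℤ)) -
    (((sSup (rk '' comp i g) : ℕ) : ℤ) - (rk g : ℤ))

end ST

/-- The `J₆`-component `C(t)`: elements of `L7(k)` agreeing with `t` at all positions of
color `5`. -/
def Ct9 (k : ℕ) (t : L7 k) : Type :=
  {c : L7 k // ∀ x : {x : N7 × ℕ // x ∈ pos7}, x.1.1 = n5 → c.1 x = t.1 x}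

/-!
Each cell of the parallelogram holds either a position of `P₇` or one of the constants `0` and `k`.
Positions of color other than `5` occupy exactly one cell, in the row of their color; a cell holding
a constant or a position of color `5` lies between two boundary cells holding the same thing. Hence
the entries of an array depend only on what its cells hold, and composition with the map
`cellEntry` from cells to contents identifies labellings with arrays. It respects the
inequalities since neighbouring cells hold comparable contents, and conversely every covering
relation of `P₇` is witnessed by two comparable cells.
-/

/-- The covering relation at `a`, common to labellings and arrays: `f` and `g` agree except at
`a`, where `g` is larger by one. -/
def IncrementsAt {α : Type*} (a : α) (f g : α → ℕ) : Prop :=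
  g a = f a + 1 ∧ ∀ b, b ≠ a → g b = f b

theorem incrementsAt_comp_iff {α β : Type*} {σ : α → β} (hσ : Function.Surjective σ) {a : α}
    (ha : ∀ b, σ b = σ a → b = a) {f g : β → ℕ} :
    IncrementsAt a (f ∘ σ) (g ∘ σ) ↔ IncrementsAt (σ a) f g := by
  refine and_congr_right fun _ => ⟨fun h => ?_, fun h b hb => h _ fun hσb => hb (ha b hσb)⟩
  refine hσ.forall.2 fun b hb => h b ?_
  rintro rfl
  exact hb rfl

namespace CL

variable {N : Type} {adj : N → N → Prop} {pos : Finset (N × ℕ)}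

theorem le_of_ple {c : {x // x ∈ pos} → ℕ}
    (hc : ∀ x y : {x // x ∈ pos}, step adj pos x.1 y.1 → c y ≤ c x)
    {x y : {x // x ∈ pos}} (h : ple adj pos y.1 x.1) : c x ≤ c y := by
  obtain ⟨x, hx⟩ := x
  dsimp only at h
  induction h with
  | refl => exact le_rfl
  | tail _ hstep ih => exact (hc ⟨_, hstep.1⟩ ⟨_, hx⟩ hstep).trans (ih hstep.1)

theorem mem_of_ple {x y : N × ℕ} (hx : x ∈ pos) (h : ple adj pos x y) : y ∈ pos := by
  obtain rfl | ⟨_, _, hstep⟩ := h.cases_tail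
  · exact hx
  · exact hstep.2.1

theorem rank_le_of_ple {x y : N × ℕ} (h : ple adj pos x y) : x.2 ≤ y.2 := by
  induction h with
  | refl => exact le_rfl
  | tail _ hstep ih => exact ih.trans (hstep.2.2.2 ▸ Nat.le_succ _)

variable [DecidableRel adj]

variable (adj pos) in
/-- The positions lying `d` ranks above `x` in the order `ple`, computed rank by rank; this makes
`ple` decidable. -/
def levelAbove (x : N × ℕ) : ℕ → Finset (N × ℕ)
  | 0 => {x}
  | d + 1 => {z ∈ pos | z.2 = x.2 + d + 1 ∧ ∃ y ∈ levelAbove x d, adj y.1 z.1}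

theorem mem_levelAbove_iff {x y : N × ℕ} (hx : x ∈ pos) {d : ℕ} :
    y ∈ levelAbove adj pos x d ↔ ple adj pos x y ∧ y.2 = x.2 + d := by
  induction d generalizing y with
  | zero =>
    rw [levelAbove, Finset.mem_singleton, add_zero]
    refine ⟨fun h => h ▸ ⟨.refl, rfl⟩, fun ⟨h, hrank⟩ => ?_⟩
    obtain hyx | ⟨z, hxz, hzy⟩ := h.cases_tail
    · exact hyx
    · have hz : z.2 + 1 = x.2 := hzy.2.2.2.symm.trans hrank
      exact absurd (rank_le_of_ple hxz) (by omega)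
  | succ d ih =>
    rw [levelAbove, Finset.mem_filter]
    constructor
    · rintro ⟨hy, hrank, z, hz, hadj⟩
      obtain ⟨hxz, hzrank⟩ := ih.1 hz
      exact ⟨hxz.tail ⟨mem_of_ple hx hxz, hy, hadj, by omega⟩, hrank⟩
    · rintro ⟨h, hrank⟩
      obtain rfl | ⟨z, hxz, -, hy, hadj, hzy⟩ := h.cases_tail
      · omega
      · exact ⟨hy, hrank, z, ih.2 ⟨hxz, by omega⟩, hadj⟩

variable [DecidableEq N]

instance (x y : {x // x ∈ pos}) : Decidable (ple adj pos x.1 y.1) :=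
  decidable_of_iff (x.1.2 ≤ y.1.2 ∧ y.1 ∈ levelAbove adj pos x.1 (y.1.2 - x.1.2)) <| by
    rw [mem_levelAbove_iff x.2]
    refine ⟨fun h => h.2.1, fun h => ?_⟩
    have := rank_le_of_ple h
    exact ⟨this, h, by omega⟩

instance (x y : N × ℕ) : Decidable (step adj pos x y) := by
  unfold step; infer_instance

end CL

namespace ST

variable {n m : ℕ}

instance : DecidableEq (Idx n m) := by unfold Idx; infer_instance

instance : Fintype (Idx n m) :=
  Fintype.ofEquiv (Fin (n + 2) × Fin m)
    { toFun := fun p => ⟨(p.1, (p.1 : ℤ) - p.2), by dsimp only; omega⟩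
      invFun := fun p => (⟨p.1.1, by have := p.2; omega⟩,
        ⟨((p.1.1 : ℤ) - p.1.2).toNat, by have := p.2; omega⟩)
      left_inv := fun p => by ext <;> simp
      right_inv := fun p => Subtype.ext (Prod.ext rfl (by have := p.2; dsimp only; omega)) }

/-- Cells are ordered so that the arrays of `ST.Elt` are monotone: the entries increase with
the column and decrease with the offset `i - j` of the diagonal. -/
instance : Preorder (Idx n m) :=
  Preorder.lift fun p => (p.1.2, OrderDual.toDual ((p.1.1 : ℤ) - p.1.2))

theorem Idx.le_iff {p q : Idx n m} :
    p ≤ q ↔ p.1.2 ≤ q.1.2 ∧ (q.1.1 : ℤ) - q.1.2 ≤ (p.1.1 : ℤ) - p.1.2 := Iff.rfl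

instance : DecidableLE (Idx n m) := fun _ _ => decidable_of_iff _ Idx.le_iff.symm

/-- One of the elementary inequalities defining `ST.Elt`: `q` is an adjacent cell of `p` whose
entry bounds that of `p` from above. -/
def Idx.Step (p q : Idx n m) : Prop :=
  (p.1.1 = q.1.1 + 1 ∧ p.1.2 = q.1.2) ∨ (q.1.1 = p.1.1 + 1 ∧ q.1.2 = p.1.2 + 1)

instance (p q : Idx n m) : Decidable (p.Step q) := by unfold Idx.Step; infer_instance

theorem Idx.Step.le {p q : Idx n m} (h : p.Step q) : p ≤ q := by
  rw [Idx.le_iff]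
  unfold Idx.Step at h
  omega

/-- The cell lies in one of the two rows that the boundary functions prescribe. -/
def Idx.OnBoundary (p : Idx n m) : Prop := p.1.1 = 0 ∨ p.1.1 = n + 1

instance : DecidablePred (Idx.OnBoundary (n := n) (m := m)) := by
  unfold Idx.OnBoundary; infer_instance

theorem Idx.exists_step_of_le_of_ne {p q : Idx n m} (hle : p ≤ q) (hne : p ≠ q) :
    ∃ r, p.Step r ∧ r ≤ q := by
  obtain ⟨⟨i, j⟩, hp⟩ := p
  obtain ⟨⟨i', j'⟩, hq⟩ := q
  obtain ⟨hcol, hdiag⟩ := Idx.le_iff.1 hle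
  have hne : ¬ (i = i' ∧ j = j') := by
    rintro ⟨rfl, rfl⟩
    exact hne rfl
  dsimp only at hp hq hcol hdiag
  by_cases hright : j < j' ∧ i ≤ n
  · exact ⟨⟨(i + 1, j + 1), by dsimp only; omega⟩, .inr ⟨rfl, rfl⟩,
      Idx.le_iff.2 (by dsimp only; omega)⟩
  · exact ⟨⟨(i - 1, j), by dsimp only; omega⟩, .inl ⟨by dsimp only; omega, rfl⟩,
      Idx.le_iff.2 (by dsimp only; omega)⟩

theorem Idx.monotone_of_step {α : Type*} [Preorder α] {g : Idx n m → α}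
    (hg : ∀ p q, p.Step q → g p ≤ g q) : Monotone g := by
  intro p q hle
  induction hd : ((q.1.2 - p.1.2) + (p.1.1 - p.1.2 - (q.1.1 - q.1.2)) : ℤ).toNat
    using Nat.strong_induction_on generalizing p with
  | _ d ih =>
    obtain rfl | hne := eq_or_ne p q
    · exact le_rfl
    obtain ⟨r, hstep, hrq⟩ := Idx.exists_step_of_le_of_ne hle hne
    refine (hg p r hstep).trans (ih _ ?_ hrq rfl)
    obtain ⟨hcol, hdiag⟩ := Idx.le_iff.1 hrq
    unfold Idx.Step at hstep
    omega

theorem Elt.monotone {β0 β1 : ℤ → ℕ} (g : Elt n m β0 β1) : Monotone g.1 :=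
  Idx.monotone_of_step fun p q hstep => hstep.elim
    (fun h => g.2.2.2.1 q p h.1 h.2) (fun h => g.2.2.2.2 p q h.1 h.2)

end ST

/-- The formal content of a cell of an array built from a labelling of `P` by `{0,…,k}`: one of
the constants `0` and `k`, or the label of a position. -/
inductive Entry (P : Type) : Type
  | zero
  | bound
  | label (x : P)
  deriving DecidableEq

namespace Entry

variable {P : Type} {k : ℕ} {c d : P → ℕ}

/-- The number which an entry stands for, given the bound `k` and the labelling `c`. -/
def eval (k : ℕ) (c : P → ℕ) : Entry P → ℕ
  | zero => 0
  | bound => k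
  | label x => c x

/-- The comparisons between entries which hold for every labelling by `{0,…,k}` that is
antitone for `r`. -/
def Le (r : P → P → Prop) : Entry P → Entry P → Prop
  | zero, _ => True
  | _, bound => True
  | label x, label y => r y x
  | _, _ => False

instance (r : P → P → Prop) [DecidableRel r] : DecidableRel (Le r)
  | zero, _ => .isTrue trivial
  | bound, bound => .isTrue trivial
  | label _, bound => .isTrue trivial
  | label x, label y => inferInstanceAs (Decidable (r y x))
  | bound, zero => .isFalse id
  | bound, label _ => .isFalse id
  | label _, zero => .isFalse id

theorem eval_le_eval_of_le {r : P → P → Prop} (hk : ∀ x, c x ≤ k)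
    (hc : ∀ x y, r y x → c x ≤ c y) {e e' : Entry P} (h : Le r e e') :
    e.eval k c ≤ e'.eval k c := by
  match e, e', h with
  | zero, _, _ => exact Nat.zero_le _
  | bound, bound, _ => exact le_rfl
  | label x, bound, _ => exact hk x
  | label x, label y, h => exact hc x y h

theorem eval_le_eval_iff : eval k c ≤ eval k d ↔ c ≤ d := by
  refine ⟨fun h x => h (label x), fun h e => ?_⟩
  cases e with
  | zero | bound => exact le_rfl
  | label x => exact h x

theorem eval_injective : Function.Injective (eval k : (P → ℕ) → Entry P → ℕ) :=
  fun _ _ h => funext fun x => congrFun h (label x)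

theorem incrementsAt_eval_iff {x : P} :
    IncrementsAt (label x) (eval k c) (eval k d) ↔ IncrementsAt x c d := by
  refine and_congr_right fun _ => ⟨fun h y hy => h (label y) (by simpa using hy), fun h e he => ?_⟩
  cases e with
  | zero | bound => rfl
  | label y => exact h y (by simpa using he)

end Entry

/-- The positions of the minuscule poset `P₇`, as a type. -/
abbrev P7 : Type := {x : N7 × ℕ // x ∈ pos7}

/-- The entry has the same value for all members of a component `Ct9 k t`. -/
def Entry.IsFixed : Entry P7 → Prop
  | zero => True
  | bound => True
  | label x => x.1.1 = n5

instance : DecidablePred Entry.IsFixed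
  | .zero => .isTrue trivial
  | .bound => .isTrue trivial
  | .label x => inferInstanceAs (Decidable (x.1.1 = n5))

/-- The color of `E₇` carried by the interior row `i` of the parallelogram, `1 ≤ i ≤ 6`; all
other rows get the removed color `5`. -/
def rowColor : ℕ → N7
  | 1 => n1 | 2 => n2 | 3 => n3 | 4 => n4 | 5 => n5p | 6 => n6p | _ => n5

theorem eq_of_rowColor_eq {i j : ℕ} (h : rowColor i = rowColor j) (hi : rowColor i ≠ n5) :
    i = j := by
  unfold rowColor at h hi
  split at h <;> split at h <;> simp_all

/-- The content of the cells of the parallelogram in the array of a labelling: the position of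
rank `q` and color `rowColor i ≠ n5` sits in row `i` and column `(i + 1 - q) / 2`. Every other cell
holds the value which the two boundary rows force on it. The tests on the column come first, so
that `toNat` never truncates. -/
def cellEntry (p : ST.Idx 6 9) : Entry P7 :=
  if p.1.2 = -8 then .zero
  else if 2 ≤ p.1.2 then .bound
  else if h : (rowColor p.1.1, ((p.1.1 : ℤ) + 1 - 2 * p.1.2).toNat) ∈ pos7 then .label ⟨_, h⟩
  else if p.1.2 ≤ -4 then .label ⟨(n5, 12), by decide⟩
  else if p.1.2 - p.1.1 ≤ -6 then .label ⟨(n5, 8), by decide⟩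
  else .label ⟨(n5, 4), by decide⟩

theorem cellEntry_surjective : Function.Surjective cellEntry := by
  have hlabel : ∀ x : P7, ∃ p, cellEntry p = .label x := by decide +kernel
  rintro (_ | _ | x)
  · exact ⟨⟨(0, -8), by decide⟩, rfl⟩
  · exact ⟨⟨(7, 7), by decide⟩, rfl⟩
  · exact hlabel x

theorem eq_of_cellEntry_eq :
    ∀ p q, cellEntry p = cellEntry q → ¬ (cellEntry q).IsFixed → p = q := by
  decide +kernel

theorem color_eq_of_cellEntry_eq_label :
    ∀ p x, cellEntry p = .label x → x.1.1 ≠ n5 → x.1.1 = rowColor p.1.1 := by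
  decide +kernel

theorem cellEntry_row_zero : ∀ p : ST.Idx 6 9, p.1.1 = 0 → cellEntry p =
    if p.1.2 = -8 then .zero else if p.1.2 ≤ -4 then .label ⟨(n5, 12), by decide⟩
      else .label ⟨(n5, 4), by decide⟩ := by
  decide +kernel

theorem cellEntry_row_seven : ∀ p : ST.Idx 6 9, p.1.1 = 7 → cellEntry p =
    if p.1.2 ≤ 1 then .label ⟨(n5, 8), by decide⟩ else .bound := by
  decide +kernel

theorem cellEntry_le_of_step : ∀ p q : ST.Idx 6 9, p.Step q →
    Entry.Le (fun x y : P7 => CL.ple adj7 pos7 x.1 y.1) (cellEntry p) (cellEntry q) := by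
  decide +kernel

set_option synthInstance.maxSize 1000 in
theorem exists_cells_of_step : ∀ x y : P7, CL.step adj7 pos7 x.1 y.1 →
    ∃ p, cellEntry p = .label x ∧ ∃ q, cellEntry q = .label y ∧ q ≤ p := by
  decide +kernel

theorem isFixed_cellEntry_of_onBoundary :
    ∀ {p : ST.Idx 6 9}, p.OnBoundary → (cellEntry p).IsFixed := by
  decide +kernel

theorem exists_onBoundary_le_le : ∀ p, (cellEntry p).IsFixed →
    (∃ b, b.OnBoundary ∧ cellEntry b = cellEntry p ∧ b ≤ p) ∧
    ∃ b, b.OnBoundary ∧ cellEntry b = cellEntry p ∧ p ≤ b := by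
  decide +kernel

section Component

variable {k : ℕ} {t : L7 k}

/-- The boundary row `0` of the skew-tabular lattice attached to `t`. -/
abbrev boundaryRowZero (t : L7 k) (j : ℤ) : ℕ :=
  if j = -8 then 0 else if j ≤ -4 then t.1 ⟨(n5, 12), by decide⟩ else t.1 ⟨(n5, 4), by decide⟩

/-- The boundary row `7` of the skew-tabular lattice attached to `t`. -/
abbrev boundaryRowSeven (t : L7 k) (j : ℤ) : ℕ :=
  if j ≤ 1 then t.1 ⟨(n5, 8), by decide⟩ else k

/-- The skew-tabular lattice `S(t)`. -/
abbrev St9 (t : L7 k) : Type := ST.Elt 6 9 (boundaryRowZero t) (boundaryRowSeven t)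

theorem eval_cellEntry_row_zero {p : ST.Idx 6 9} (hp : p.1.1 = 0) :
    (cellEntry p).eval k t.1 = boundaryRowZero t p.1.2 := by
  simp only [cellEntry_row_zero p hp, apply_ite (Entry.eval k t.1)]
  rfl

theorem eval_cellEntry_row_seven {p : ST.Idx 6 9} (hp : p.1.1 = 7) :
    (cellEntry p).eval k t.1 = boundaryRowSeven t p.1.2 := by
  simp only [cellEntry_row_seven p hp, apply_ite (Entry.eval k t.1)]
  rfl

theorem Ct9.eval_eq (c : Ct9 k t) {e : Entry P7} (he : e.IsFixed) :
    e.eval k c.1.1 = e.eval k t.1 := by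
  cases e with
  | zero | bound => rfl
  | label x => exact c.2 x he

theorem monotone_eval_cellEntry (c : L7 k) : Monotone (Entry.eval k c.1 ∘ cellEntry) :=
  ST.Idx.monotone_of_step fun p q hstep =>
    Entry.eval_le_eval_of_le c.2.1 c.2.2.1 (cellEntry_le_of_step p q hstep)

/-- The skew-tabular array of a labelling in the component of `t`; this map is the isomorphism. -/
def Ct9.toSkewTabular (c : Ct9 k t) : St9 t where
  val := Entry.eval k c.1.1 ∘ cellEntry
  property :=
    ⟨fun _ hp => (c.eval_eq (isFixed_cellEntry_of_onBoundary (.inl hp))).trans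
        (eval_cellEntry_row_zero hp),
      fun _ hp => (c.eval_eq (isFixed_cellEntry_of_onBoundary (.inr hp))).trans
        (eval_cellEntry_row_seven hp),
      fun _ _ hrow hcol => monotone_eval_cellEntry c.1 (ST.Idx.Step.le (.inl ⟨hrow, hcol⟩)),
      fun _ _ hrow hcol => monotone_eval_cellEntry c.1 (ST.Idx.Step.le (.inr ⟨hrow, hcol⟩))⟩

theorem Ct9.toSkewTabular_le_iff {c d : Ct9 k t} :
    ST.le c.toSkewTabular d.toSkewTabular ↔ CL.elLe c.1 d.1 :=
  cellEntry_surjective.forall.symm.trans Entry.eval_le_eval_iff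

theorem Ct9.toSkewTabular_injective :
    Function.Injective (Ct9.toSkewTabular : Ct9 k t → _) := fun _ _ h =>
  Subtype.ext <| Subtype.ext <| Entry.eval_injective <|
    cellEntry_surjective.injective_comp_right <| congrArg Subtype.val h

theorem Ct9.incrementsAt_toSkewTabular_iff {c d : Ct9 k t} {p : ST.Idx 6 9} {x : P7}
    (hp : cellEntry p = .label x) (hx : x.1.1 ≠ n5) :
    IncrementsAt p c.toSkewTabular.1 d.toSkewTabular.1 ↔ IncrementsAt x c.1.1 d.1.1 := by
  have huniq : ∀ q, cellEntry q = cellEntry p → q = p := fun q hq =>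
    eq_of_cellEntry_eq q p hq (hp ▸ hx)
  change IncrementsAt p (Entry.eval k c.1.1 ∘ cellEntry) (Entry.eval k d.1.1 ∘ cellEntry) ↔ _
  rw [incrementsAt_comp_iff cellEntry_surjective huniq, hp, Entry.incrementsAt_eval_iff]

theorem Ct9.not_incrementsAt_of_isFixed {c d : Ct9 k t} {p : ST.Idx 6 9}
    (hp : (cellEntry p).IsFixed) :
    ¬ IncrementsAt p c.toSkewTabular.1 d.toSkewTabular.1 := by
  intro h
  have hcd : c.toSkewTabular.1 p = d.toSkewTabular.1 p := (c.eval_eq hp).trans (d.eval_eq hp).symm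
  exact absurd h.1 (by omega)

theorem Ct9.edge_iff_edge_toSkewTabular (c d : Ct9 k t) {i : ℕ} (hi : rowColor i ≠ n5) :
    CL.edge (rowColor i) c.1 d.1 ↔ ST.edge i c.toSkewTabular d.toSkewTabular := by
  constructor
  · rintro ⟨x, hx, hinc⟩
    obtain ⟨p, hp⟩ := cellEntry_surjective (.label x)
    have hx5 : x.1.1 ≠ n5 := hx ▸ hi
    have hrow : rowColor i = rowColor p.1.1 :=
      hx.symm.trans (color_eq_of_cellEntry_eq_label p x hp hx5)
    exact ⟨p, (eq_of_rowColor_eq hrow hi).symm, (incrementsAt_toSkewTabular_iff hp hx5).2 hinc⟩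
  · rintro ⟨p, rfl, hinc⟩
    have hfree : ¬ (cellEntry p).IsFixed := fun hp => not_incrementsAt_of_isFixed hp hinc
    match hp : cellEntry p with
    | .zero | .bound => exact (hfree (hp ▸ trivial)).elim
    | .label x =>
      rw [hp] at hfree
      exact ⟨x, color_eq_of_cellEntry_eq_label p x hp hfree,
        (incrementsAt_toSkewTabular_iff hp hfree).1 hinc⟩

namespace St9

variable (g : St9 t)

theorem apply_eq_eval_of_onBoundary {p : ST.Idx 6 9} (hp : p.OnBoundary) :
    g.1 p = (cellEntry p).eval k t.1 := by
  obtain hp | hp := hp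
  · rw [g.2.1 p hp, eval_cellEntry_row_zero hp]
  · rw [g.2.2.1 p hp, eval_cellEntry_row_seven hp]

theorem apply_eq_eval_of_isFixed {p : ST.Idx 6 9} (hp : (cellEntry p).IsFixed) :
    g.1 p = (cellEntry p).eval k t.1 := by
  obtain ⟨⟨b, hb, hbp, hle⟩, b', hb', hb'p, hle'⟩ := exists_onBoundary_le_le p hp
  apply le_antisymm
  · rw [← hb'p, ← g.apply_eq_eval_of_onBoundary hb']
    exact g.monotone hle'
  · rw [← hbp, ← g.apply_eq_eval_of_onBoundary hb]
    exact g.monotone hle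

theorem factorsThrough_cellEntry : Function.FactorsThrough g.1 cellEntry := by
  intro p q hpq
  by_cases hq : (cellEntry q).IsFixed
  · rw [g.apply_eq_eval_of_isFixed hq, g.apply_eq_eval_of_isFixed (hpq ▸ hq), hpq]
  · rw [eq_of_cellEntry_eq p q hpq hq]

theorem apply_le_bound (p : ST.Idx 6 9) : g.1 p ≤ k := by
  have htop : p ≤ ⟨(7, 7), by decide⟩ := ST.Idx.le_iff.2 (by have := p.2; dsimp only; omega)
  exact (g.monotone htop).trans_eq (g.2.2.1 _ rfl)

/-- The labelling of `P₇` read off an array, at an arbitrarily chosen cell for each position (all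
cells with the same content agree). It is the preimage of the array under `Ct9.toSkewTabular`. -/
def label (x : P7) : ℕ :=
  g.1 (Function.surjInv cellEntry_surjective (.label x))

theorem label_eq_apply {p : ST.Idx 6 9} {x : P7} (hp : cellEntry p = .label x) :
    g.label x = g.1 p :=
  g.factorsThrough_cellEntry ((Function.surjInv_eq _ _).trans hp.symm)

theorem eval_label_comp_cellEntry : Entry.eval k g.label ∘ cellEntry = g.1 := by
  funext p
  rw [Function.comp_apply]
  match hp : cellEntry p with
  | .zero | .bound => rw [g.apply_eq_eval_of_isFixed (hp ▸ trivial), hp]; rfl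
  | .label x => exact g.label_eq_apply hp

theorem label_le_of_step {x y : P7} (h : CL.step adj7 pos7 x.1 y.1) :
    g.label y ≤ g.label x := by
  obtain ⟨p, hp, q, hq, hqp⟩ := exists_cells_of_step x y h
  rw [g.label_eq_apply hp, g.label_eq_apply hq]
  exact g.monotone hqp

theorem label_eq_of_color_eq_n5 {x : P7} (hx : x.1.1 = n5) : g.label x = t.1 x := by
  obtain ⟨p, hp⟩ := cellEntry_surjective (.label x)
  rw [g.label_eq_apply hp, g.apply_eq_eval_of_isFixed (hp ▸ hx), hp, Entry.eval]

end St9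

theorem Ct9.toSkewTabular_surjective :
    Function.Surjective (Ct9.toSkewTabular : Ct9 k t → _) := by
  intro g
  let c : L7 k := ⟨g.label, fun _ => g.apply_le_bound _,
    fun _ _ => CL.le_of_ple fun _ _ => g.label_le_of_step, trivial⟩
  exact ⟨⟨c, fun _ => g.label_eq_of_color_eq_n5⟩, Subtype.ext g.eval_label_comp_cellEntry⟩

end Component

/-- Lemma 4.2: the `J₆`-component of `t` in `L7(k)` is isomorphic, as a
poset with colored covering relations, to a skew-tabular lattice with `n = 6`, `m = 9`,
where the `E₇` colors `1,2,3,4,5',6'` correspond to the colors `1,…,6`. -/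
theorem statement_9 (k : ℕ) (t : L7 k) :
    ∃ f : Ct9 k t → ST.Elt 6 9
        (fun j => if j = -8 then 0 else if j ≤ -4 then t.1 ⟨(n5, 12), by decide⟩
          else t.1 ⟨(n5, 4), by decide⟩)
        (fun j => if j ≤ 1 then t.1 ⟨(n5, 8), by decide⟩ else k),
      Function.Bijective f ∧
      (∀ c d : Ct9 k t, CL.elLe c.1 d.1 ↔ ST.le (f c) (f d)) ∧
      ∀ c d : Ct9 k t,
        (CL.edge n1 c.1 d.1 ↔ ST.edge 1 (f c) (f d)) ∧
        (CL.edge n2 c.1 d.1 ↔ ST.edge 2 (f c) (f d)) ∧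
        (CL.edge n3 c.1 d.1 ↔ ST.edge 3 (f c) (f d)) ∧
        (CL.edge n4 c.1 d.1 ↔ ST.edge 4 (f c) (f d)) ∧
        (CL.edge n5p c.1 d.1 ↔ ST.edge 5 (f c) (f d)) ∧
        (CL.edge n6p c.1 d.1 ↔ ST.edge 6 (f c) (f d)) := by
  exact ⟨Ct9.toSkewTabular, ⟨Ct9.toSkewTabular_injective, Ct9.toSkewTabular_surjective⟩,
    fun _ _ => Ct9.toSkewTabular_le_iff.symm, fun c d =>
      ⟨c.edge_iff_edge_toSkewTabular d (i := 1) (by decide),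
        c.edge_iff_edge_toSkewTabular d (i := 2) (by decide),
        c.edge_iff_edge_toSkewTabular d (i := 3) (by decide),
        c.edge_iff_edge_toSkewTabular d (i := 4) (by decide),
        c.edge_iff_edge_toSkewTabular d (i := 5) (by decide),
        c.edge_iff_edge_toSkewTabular d (i := 6) (by decide)⟩⟩

end
end
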